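/- arXiv:1402.2763 — 2 statements merged into one kernel-verified Lean document; each statement's English description precedes it below -/
import Mathlib

section
/- Let Ψ : ℝⁿ → ℝ be C² on an open set U with Ψ(x) > 0 on U, let λ > 0, let Σ ∈ ℝ^{n×n} be symmetric, let f : ℝⁿ → ℝⁿ and q : ℝⁿ → ℝ be functions, and set V = -λ·log(Ψ). Then for each x ∈ U, the stationary nonlinear Hamilton–Jacobi–Bellman equation 0 = q(x) + ∇V(x)ᵀf(x) - (1/(2λ))·∇V(x)ᵀ Σ ∇V(x) + (1/2)·tr(Σ·∇²V(x)) holds at x if and only if the linear equation (1/λ)·q(x)·Ψ(x) = f(x)ᵀ∇Ψ(x) + (1/2)·tr(Σ·∇²Ψ(x)) holds at x. -/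
open Matrix

/-- The gradient of `Ψ : ℝⁿ → ℝ` at `x`, as a vector in `ℝⁿ`. -/
noncomputable def grad {n : ℕ} (Ψ : (Fin n → ℝ) → ℝ) (x : Fin n → ℝ) : Fin n → ℝ :=
  fun i => fderiv ℝ Ψ x (Pi.single i 1)

/-- The Hessian matrix of `Ψ : ℝⁿ → ℝ` at `x`. -/
noncomputable def hess {n : ℕ} (Ψ : (Fin n → ℝ) → ℝ) (x : Fin n → ℝ) :
    Matrix (Fin n) (Fin n) ℝ :=
  Matrix.of fun i j => fderiv ℝ (fun y => fderiv ℝ Ψ y (Pi.single j 1)) x (Pi.single i 1)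

open scoped Filter Topology

/-- The logarithmic transform `-λ log Ψ`, turning a desirability function `Ψ` into a value function.
It is meant for positive `Ψ`; at negative values `Real.log` returns `log |Ψ|`. -/
noncomputable def logTransform {α : Type*} (lam : ℝ) (Ψ : α → ℝ) : α → ℝ :=
  fun y => -lam * Real.log (Ψ y)

theorem eventually_differentiableAt_of_contDiffAt {E F : Type*} [NormedAddCommGroup E]
    [NormedSpace ℝ E] [NormedAddCommGroup F] [NormedSpace ℝ F] {g : E → F} {x : E}
    (hg : ContDiffAt ℝ 1 g x) : ∀ᶠ y in 𝓝 x, DifferentiableAt ℝ g y :=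
  (hg.eventually (by simp)).mono fun _ hy => hy.differentiableAt one_ne_zero

theorem trace_mul_vecMulVec {m k R : Type*} [Fintype m] [Fintype k] [NonUnitalCommSemiring R]
    (A : Matrix m k R) (u : k → R) (v : m → R) :
    (A * vecMulVec u v).trace = v ⬝ᵥ A *ᵥ u := by
  rw [mul_vecMulVec, trace_vecMulVec, dotProduct_comm]

section Calculus

variable {n : ℕ} {Ψ : (Fin n → ℝ) → ℝ} {x : Fin n → ℝ}

theorem grad_congr {Φ : (Fin n → ℝ) → ℝ} (h : Φ =ᶠ[𝓝 x] Ψ) : grad Φ x = grad Ψ x := by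
  ext i
  simp only [grad, h.fderiv_eq]

theorem grad_mul {Φ : (Fin n → ℝ) → ℝ} (hΦ : DifferentiableAt ℝ Φ x)
    (hΨ : DifferentiableAt ℝ Ψ x) :
    grad (fun y => Φ y * Ψ y) x = Φ x • grad Ψ x + Ψ x • grad Φ x := by
  ext i
  simp [grad, fderiv_fun_mul hΦ hΨ]

theorem grad_comp {φ : ℝ → ℝ} {φ' : ℝ} (hφ : HasDerivAt φ φ' (Ψ x))
    (hΨ : DifferentiableAt ℝ Ψ x) : grad (fun y => φ (Ψ y)) x = φ' • grad Ψ x := by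
  ext i
  have h : HasFDerivAt (fun y => φ (Ψ y)) (φ' • fderiv ℝ Ψ x) x :=
    hφ.comp_hasFDerivAt x hΨ.hasFDerivAt
  simp [grad, h.fderiv]

theorem hess_apply (Ψ : (Fin n → ℝ) → ℝ) (x : Fin n → ℝ) (i j : Fin n) :
    hess Ψ x i j = grad (fun y => grad Ψ y j) x i := rfl

theorem hess_comp {φ φ' : ℝ → ℝ} {φ'' : ℝ} (hφ : ∀ᶠ t in 𝓝 (Ψ x), HasDerivAt φ (φ' t) t)
    (hφ' : HasDerivAt φ' φ'' (Ψ x)) (hΨ : ∀ᶠ y in 𝓝 x, DifferentiableAt ℝ Ψ y)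
    (hgrad : DifferentiableAt ℝ (grad Ψ) x) :
    hess (fun y => φ (Ψ y)) x =
      φ' (Ψ x) • hess Ψ x + φ'' • vecMulVec (grad Ψ x) (grad Ψ x) := by
  have hΨx : DifferentiableAt ℝ Ψ x := hΨ.self_of_nhds
  ext i j
  have hgrad_comp : (fun y => grad (fun z => φ (Ψ z)) y j) =ᶠ[𝓝 x]
      fun y => φ' (Ψ y) * grad Ψ y j := by
    filter_upwards [hΨx.continuousAt.eventually hφ, hΨ] with y hφy hΨy
    simp [grad_comp hφy hΨy]
  have hφ'Ψ : DifferentiableAt ℝ (fun y => φ' (Ψ y)) x :=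
    hφ'.differentiableAt.comp x hΨx
  rw [hess_apply, grad_congr hgrad_comp,
    grad_mul hφ'Ψ (differentiableAt_pi.1 hgrad j), grad_comp hφ' hΨx]
  simp only [Pi.add_apply, Pi.smul_apply, smul_eq_mul, Matrix.add_apply, Matrix.smul_apply,
    vecMulVec_apply, hess_apply]
  ring

theorem differentiableAt_grad_of_contDiffAt (hΨ : ContDiffAt ℝ 2 Ψ x) :
    DifferentiableAt ℝ (grad Ψ) x := by
  have hfderiv : DifferentiableAt ℝ (fderiv ℝ Ψ) x :=
    (hΨ.fderiv_right (m := 1) (by norm_num)).differentiableAt one_ne_zero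
  exact differentiableAt_pi.2 fun i => hfderiv.clm_apply (differentiableAt_const _)

theorem grad_logTransform (lam : ℝ) (hx : Ψ x ≠ 0) (hΨ : DifferentiableAt ℝ Ψ x) :
    grad (logTransform lam Ψ) x = (-lam * (Ψ x)⁻¹) • grad Ψ x :=
  grad_comp ((Real.hasDerivAt_log hx).const_mul (-lam)) hΨ

theorem hess_logTransform (lam : ℝ) (hx : Ψ x ≠ 0) (hΨ : ∀ᶠ y in 𝓝 x, DifferentiableAt ℝ Ψ y)
    (hgrad : DifferentiableAt ℝ (grad Ψ) x) :
    hess (logTransform lam Ψ) x =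
      (-lam * (Ψ x)⁻¹) • hess Ψ x +
        (lam * (Ψ x ^ 2)⁻¹) • vecMulVec (grad Ψ x) (grad Ψ x) :=
  hess_comp ((eventually_ne_nhds hx).mono fun _ ht => (Real.hasDerivAt_log ht).const_mul (-lam))
    (((hasDerivAt_inv hx).const_mul (-lam)).congr_deriv (neg_mul_neg _ _)) hΨ hgrad

end Calculus

section HamiltonJacobiBellman

variable {n : ℕ} {Ψ : (Fin n → ℝ) → ℝ} {x : Fin n → ℝ} {lam : ℝ}

-- The Hessian of `-λ log Ψ` contributes `(λ / (2Ψ²)) ∇ΨᵀΣ∇Ψ`, which cancels the quadratic term.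
theorem hjb_residual_logTransform (hlam : lam ≠ 0) (hx : Ψ x ≠ 0)
    (hΨ : ∀ᶠ y in 𝓝 x, DifferentiableAt ℝ Ψ y) (hgrad : DifferentiableAt ℝ (grad Ψ) x)
    (Sg : Matrix (Fin n) (Fin n) ℝ) (b : Fin n → ℝ) (c : ℝ) :
    c + grad (logTransform lam Ψ) x ⬝ᵥ b
        - (1 / (2 * lam)) *
          (grad (logTransform lam Ψ) x ⬝ᵥ Sg *ᵥ grad (logTransform lam Ψ) x)
        + (1 / 2) * (Sg * hess (logTransform lam Ψ) x).trace
      = lam / Ψ x *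
        ((1 / lam) * c * Ψ x - (b ⬝ᵥ grad Ψ x + (1 / 2) * (Sg * hess Ψ x).trace)) := by
  have hdrift : grad (logTransform lam Ψ) x ⬝ᵥ b = -lam * (Ψ x)⁻¹ * (b ⬝ᵥ grad Ψ x) := by
    rw [grad_logTransform lam hx hΨ.self_of_nhds, smul_dotProduct, dotProduct_comm, smul_eq_mul]
  have hquad : grad (logTransform lam Ψ) x ⬝ᵥ Sg *ᵥ grad (logTransform lam Ψ) x =
      (-lam * (Ψ x)⁻¹) ^ 2 * (grad Ψ x ⬝ᵥ Sg *ᵥ grad Ψ x) := by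
    rw [grad_logTransform lam hx hΨ.self_of_nhds, mulVec_smul, smul_dotProduct, dotProduct_smul,
      smul_eq_mul, smul_eq_mul, ← mul_assoc, sq]
  have htrace : (Sg * hess (logTransform lam Ψ) x).trace =
      -lam * (Ψ x)⁻¹ * (Sg * hess Ψ x).trace +
        lam * (Ψ x ^ 2)⁻¹ * (grad Ψ x ⬝ᵥ Sg *ᵥ grad Ψ x) := by
    simp only [hess_logTransform lam hx hΨ hgrad, Matrix.mul_add, Matrix.mul_smul, trace_add,
      trace_smul, trace_mul_vecMulVec, smul_eq_mul]
  rw [hdrift, hquad, htrace]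
  field_simp
  ring

theorem stmt3_general (hlam : lam ≠ 0) (hpos : 0 < Ψ x)
    (hΨ : ∀ᶠ y in 𝓝 x, DifferentiableAt ℝ Ψ y) (hgrad : DifferentiableAt ℝ (grad Ψ) x)
    (Sg : Matrix (Fin n) (Fin n) ℝ) (b : Fin n → ℝ) (c : ℝ) :
    (0 = c + grad (logTransform lam Ψ) x ⬝ᵥ b
          - (1 / (2 * lam)) *
            (grad (logTransform lam Ψ) x ⬝ᵥ Sg *ᵥ grad (logTransform lam Ψ) x)
          + (1 / 2) * (Sg * hess (logTransform lam Ψ) x).trace)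
    ↔ ((1 / lam) * c * Ψ x = b ⬝ᵥ grad Ψ x + (1 / 2) * (Sg * hess Ψ x).trace) := by
  rw [hjb_residual_logTransform hlam hpos.ne' hΨ hgrad, zero_eq_mul,
    or_iff_right (div_ne_zero hlam hpos.ne'), sub_eq_zero]

end HamiltonJacobiBellman

/-- with `V = -λ log Ψ` (Ψ C² and positive on the open set U, λ > 0,
Σ symmetric), at each `x ∈ U` the stationary nonlinear HJB equation
`0 = q + ∇Vᵀf - (1/(2λ))∇VᵀΣ∇V + (1/2)tr(Σ∇²V)` holds iff the linear equation
`(1/λ)qΨ = fᵀ∇Ψ + (1/2)tr(Σ∇²Ψ)` holds. -/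
theorem stmt3 {n : ℕ} (U : Set (Fin n → ℝ)) (hU : IsOpen U)
    (Ψ : (Fin n → ℝ) → ℝ) (hΨ : ContDiffOn ℝ 2 Ψ U)
    (lam : ℝ) (hlam : 0 < lam) (hpos : ∀ x ∈ U, 0 < Ψ x)
    (Sg : Matrix (Fin n) (Fin n) ℝ) (hSg : Sg.IsSymm)
    (f : (Fin n → ℝ) → (Fin n → ℝ)) (q : (Fin n → ℝ) → ℝ) :
    let V : (Fin n → ℝ) → ℝ := fun y => -lam * Real.log (Ψ y)
    ∀ x ∈ U,
      (0 = q x + grad V x ⬝ᵥ f x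
            - (1 / (2 * lam)) * (grad V x ⬝ᵥ Sg.mulVec (grad V x))
            + (1 / 2) * (Sg * hess V x).trace)
      ↔ ((1 / lam) * q x * Ψ x
            = f x ⬝ᵥ grad Ψ x + (1 / 2) * (Sg * hess Ψ x).trace) := by
  intro _ x hx
  have hΨx : ContDiffAt ℝ 2 Ψ x := hΨ.contDiffAt (hU.mem_nhds hx)
  exact stmt3_general hlam.ne' (hpos x hx)
    (eventually_differentiableAt_of_contDiffAt (hΨx.of_le one_le_two))
    (differentiableAt_grad_of_contDiffAt hΨx) Sg (f x) (q x)
end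

section
/- (Stengle's Positivstellensatz) Let f₁,…,f_m and h₁,…,h_p be polynomials in ℝ[x₁,…,xₙ]. The set X = { x ∈ ℝⁿ : fᵢ(x) ≥ 0 for all i = 1,…,m and hⱼ(x) = 0 for all j = 1,…,p } is empty if and only if there exist polynomials t₁,…,t_p ∈ ℝ[x₁,…,xₙ] and, for every subset A ⊆ {1,…,m}, a polynomial s_A ∈ ℝ[x₁,…,xₙ] that is a sum of squares of polynomials, such that -1 = Σⱼ tⱼ·hⱼ + Σ_{A ⊆ {1,…,m}} s_A · ∏_{i ∈ A} fᵢ. -/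
/-- A polynomial is a sum of squares if it is a finite sum of squares of
polynomials. -/
def IsSOS {n : ℕ} (p : MvPolynomial (Fin n) ℝ) : Prop :=
  ∃ (k : ℕ) (g : Fin k → MvPolynomial (Fin n) ℝ), p = ∑ i, (g i) ^ 2

/-!
Suppose that `-1` does not lie in the preordering `T` generated by the `fᵢ` in the quotient ring
`A = ℝ[x] / (hⱼ)`. Then `0 ∉ 1 + T`, so `1 + T` may be inverted, and a residue field of the
localization is a field in which sums of products `fᵢ₁ ⋯ fᵢₖ g²` still avoid `-1`. By Zorn's lemma
it has a maximal algebraic extension `K` with this property. In `K` these sums form the nonnegative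
cone of an order, and polynomials over `K` satisfy the intermediate value theorem. The images of the
variables are thus a solution of `fᵢ ≥ 0`, `hⱼ = 0` over `K`.

To bring this solution down to `ℝ`, close a finite set of polynomials in one variable under
derivatives, pseudo-remainders and removal of leading terms. The signs of the leading coefficients
then determine the sign table of the whole set: Rolle's theorem and the intermediate value theorem
build it up degree by degree. Hence the sign patterns occurring over `K` and over `ℝ` can be matched
one variable at a time, and a real solution follows.
-/

section PolynomialIVP

open Polynomial Set

/-- The intermediate value property for polynomials. Among ordered fields it characterises the real
closed ones; the development below uses it as its notion of real closedness. -/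
class PolynomialIVP (R : Type*) [CommRing R] [LinearOrder R] : Prop where
  exists_eval_eq_zero {p : R[X]} {a b : R} :
    a < b → p.eval a * p.eval b < 0 → ∃ c ∈ Ioo a b, p.eval c = 0

instance : PolynomialIVP ℝ where
  exists_eval_eq_zero {p a b} hab hp := by
    rcases mul_neg_iff.1 hp with ⟨ha, hb⟩ | ⟨ha, hb⟩
    · exact intermediate_value_Ioo' hab.le p.continuousOn ⟨hb, ha⟩
    · exact intermediate_value_Ioo hab.le p.continuousOn ⟨ha, hb⟩

variable {R : Type*} [Field R] [LinearOrder R] [IsStrictOrderedRing R]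

theorem tendsto_eval_atTop {p : R[X]} (hdeg : 0 < p.degree) (hlead : 0 < p.leadingCoeff) :
    Filter.Tendsto p.eval Filter.atTop Filter.atTop := by
  revert hlead
  refine degree_pos_induction_on (P := fun p : R[X] => 0 < p.leadingCoeff →
    Filter.Tendsto p.eval Filter.atTop Filter.atTop) p hdeg ?_ ?_ ?_
  · intro c _ hlead
    rw [leadingCoeff_mul_X, leadingCoeff_C] at hlead
    simpa using Filter.tendsto_id.const_mul_atTop hlead
  · intro q _ ih hlead
    rw [leadingCoeff_mul_X] at hlead
    simpa using (ih hlead).atTop_mul_atTop₀ Filter.tendsto_id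
  · intro q c hq ih hlead
    rw [leadingCoeff_add_of_degree_lt' (degree_C_le.trans_lt hq)] at hlead
    simpa using Filter.tendsto_atTop_add_const_right _ c (ih hlead)

variable [PolynomialIVP R] {p : R[X]} {a b : R}

theorem exists_mem_Icc_eval_eq_zero (hab : a ≤ b) (ha : p.eval a ≤ 0) (hb : 0 ≤ p.eval b) :
    ∃ c ∈ Icc a b, p.eval c = 0 := by
  rcases ha.eq_or_lt with ha | ha
  · exact ⟨a, left_mem_Icc.2 hab, ha⟩
  rcases hb.eq_or_lt with hb | hb
  · exact ⟨b, right_mem_Icc.2 hab, hb.symm⟩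
  have hlt : a < b := hab.lt_of_ne (by rintro rfl; exact ha.not_gt hb)
  obtain ⟨c, hc, hroot⟩ :=
    PolynomialIVP.exists_eval_eq_zero hlt (mul_neg_of_neg_of_pos ha hb)
  exact ⟨c, Ioo_subset_Icc_self hc, hroot⟩

theorem isSquare_of_nonneg_of_polynomialIVP {c : R} (hc : 0 ≤ c) : IsSquare c := by
  obtain ⟨r, -, hr⟩ := exists_mem_Icc_eval_eq_zero (p := X ^ 2 - C c) (a := 0) (b := c + 1)
    (by positivity) (by simpa using hc) (by simp; nlinarith)
  exact ⟨r, by simp at hr; linear_combination -hr⟩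

theorem sign_map_of_polynomialIVP {K : Type*} [Field K] [LinearOrder K]
    [IsStrictOrderedRing K] (φ : R →+* K) (c : R) : SignType.sign (φ c) = SignType.sign c := by
  have map_pos {d : R} (hd : 0 < d) : 0 < φ d := by
    obtain ⟨r, rfl⟩ := isSquare_of_nonneg_of_polynomialIVP hd.le
    rw [map_mul]
    exact mul_self_pos.2 ((map_ne_zero φ).2 (left_ne_zero_of_mul hd.ne'))
  rcases lt_trichotomy c 0 with hc | rfl | hc
  · have := map_pos (neg_pos.2 hc)
    rw [map_neg, neg_pos] at this
    rw [sign_neg this, sign_neg hc]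
  · rw [map_zero, sign_zero, sign_zero]
  · rw [sign_pos (map_pos hc), sign_pos hc]

theorem eval_mul_eval_pos_of_forall_ne_zero (hab : a ≤ b) (hp : ∀ c ∈ Icc a b, p.eval c ≠ 0) :
    0 < p.eval a * p.eval b := by
  by_contra! hneg
  have hneg : p.eval a * p.eval b < 0 := hneg.lt_of_ne
    (mul_ne_zero (hp a (left_mem_Icc.2 hab)) (hp b (right_mem_Icc.2 hab)))
  have hlt : a < b := hab.lt_of_ne (by rintro rfl; exact hneg.not_ge (mul_self_nonneg _))
  obtain ⟨c, hc, hroot⟩ := PolynomialIVP.exists_eval_eq_zero hlt hneg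
  exact hp c (Ioo_subset_Icc_self hc) hroot

theorem exists_eval_derivative_eq_zero_of_eq_mul {q : R[X]} {m n : ℕ} (hab : a < b)
    (hp : p = (X - C a) ^ (m + 1) * ((X - C b) ^ (n + 1) * q))
    (hq : 0 < q.eval a * q.eval b) : ∃ c ∈ Ioo a b, (derivative p).eval c = 0 := by
  let r := ((m : R[X]) + 1) * (X - C b) * q + ((n : R[X]) + 1) * (X - C a) * q +
    (X - C a) * (X - C b) * derivative q
  have hderiv : derivative p = (X - C a) ^ m * (X - C b) ^ n * r := by
    simp only [hp, r, derivative_mul, derivative_X_sub_C_pow, Nat.add_sub_cancel, Nat.cast_add,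
      Nat.cast_one, C_add, C_1, C_eq_natCast]
    ring
  have hra : r.eval a = -((m + 1) * (b - a) * q.eval a) := by simp [r]; ring
  have hrb : r.eval b = (n + 1) * (b - a) * q.eval b := by simp [r]
  have hr : r.eval a * r.eval b < 0 := by
    have : 0 < ((m + 1) * (n + 1) * (b - a) ^ 2) * (q.eval a * q.eval b) := by
      have := sub_pos.2 hab
      positivity
    rw [hra, hrb]
    linarith
  obtain ⟨c, hc, hroot⟩ := PolynomialIVP.exists_eval_eq_zero hab hr
  exact ⟨c, hc, by rw [hderiv, eval_mul, hroot, mul_zero]⟩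

theorem exists_eval_derivative_eq_zero_of_forall_ne_zero (hab : a < b) (ha : p.eval a = 0)
    (hb : p.eval b = 0) (hne : ∀ c ∈ Ioo a b, p.eval c ≠ 0) :
    ∃ c ∈ Ioo a b, (derivative p).eval c = 0 := by
  obtain ⟨d, hd⟩ := exists_between hab
  have hp0 : p ≠ 0 := by rintro rfl; exact hne d hd eval_zero
  obtain ⟨r, hpr, hra⟩ := exists_eq_pow_rootMultiplicity_mul_and_not_dvd p hp0 a
  have hr0 : r ≠ 0 := by rintro rfl; exact hra (dvd_zero _)
  obtain ⟨q, hrq, hqb⟩ := exists_eq_pow_rootMultiplicity_mul_and_not_dvd r hr0 b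
  rw [dvd_iff_isRoot] at hra hqb
  have hrb : r.eval b = 0 := by
    rw [hpr, eval_mul] at hb
    exact (mul_eq_zero.1 hb).resolve_left (by simp [sub_eq_zero, hab.ne'])
  obtain ⟨m, hm⟩ := Nat.exists_eq_succ_of_ne_zero ((rootMultiplicity_pos hp0).2 ha).ne'
  obtain ⟨n, hn⟩ := Nat.exists_eq_succ_of_ne_zero ((rootMultiplicity_pos hr0).2 hrb).ne'
  rw [hm] at hpr
  rw [hn] at hrq
  refine exists_eval_derivative_eq_zero_of_eq_mul hab (hrq ▸ hpr)
    (eval_mul_eval_pos_of_forall_ne_zero hab.le fun c hc hqc => ?_)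
  rcases eq_or_ne c a with rfl | hca
  · exact hra (by rw [hrq, IsRoot, eval_mul, hqc, mul_zero])
  rcases eq_or_ne c b with rfl | hcb
  · exact hqb hqc
  · exact hne c ⟨hc.1.lt_of_ne' hca, hc.2.lt_of_ne hcb⟩ (by simp [hpr, hrq, hqc])

theorem exists_eval_derivative_eq_zero (hab : a < b) (h : p.eval a = p.eval b) :
    ∃ c ∈ Ioo a b, (derivative p).eval c = 0 := by
  wlog ha : p.eval a = 0 generalizing p
  · simpa using this (p := p - C (p.eval a)) (by simp [h]) (by simp)
  rcases eq_or_ne p 0 with rfl | hp0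
  · obtain ⟨c, hc⟩ := exists_between hab
    exact ⟨c, hc, by simp⟩
  have hne : {c ∈ p.roots.toFinset | a < c}.Nonempty :=
    ⟨b, by simp [hp0, hab, ← h, ha]⟩
  obtain ⟨c, hc⟩ := Finset.exists_minimal hne
  simp only [minimal_iff_forall_lt, Finset.mem_filter, Multiset.mem_toFinset, mem_roots hp0,
    IsRoot, not_and] at hc
  obtain ⟨⟨hroot, hac⟩, hmin⟩ := hc
  have hcb : c ≤ b := not_lt.1 fun hbc => hmin hbc (h ▸ ha) hab
  obtain ⟨d, hd, hd0⟩ := exists_eval_derivative_eq_zero_of_forall_ne_zero hac ha hroot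
    fun x hx hx0 => hmin hx.2 hx0 hx.1
  exact ⟨d, ⟨hd.1, hd.2.trans_le hcb⟩, hd0⟩

theorem exists_eval_sub_eval_eq_derivative_mul (p : R[X]) (hab : a < b) :
    ∃ c ∈ Ioo a b, p.eval b - p.eval a = (derivative p).eval c * (b - a) := by
  obtain ⟨c, hc, h⟩ := exists_eval_derivative_eq_zero
    (p := C (b - a) * p - C (p.eval b - p.eval a) * X) hab (by simp; ring)
  refine ⟨c, hc, ?_⟩
  simp only [derivative_sub, derivative_C_mul, derivative_X, eval_sub, eval_mul, eval_C,
    mul_one] at h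
  linear_combination -h

theorem eval_lt_eval_of_derivative_pos (hab : a < b)
    (h : ∀ c ∈ Ioo a b, 0 < (derivative p).eval c) : p.eval a < p.eval b := by
  obtain ⟨c, hc, hmvt⟩ := exists_eval_sub_eval_eq_derivative_mul p hab
  exact sub_pos.1 (hmvt ▸ mul_pos (h c hc) (sub_pos.2 hab))

end PolynomialIVP

section Cell

open Polynomial Set

/-- The points in the same position as `x` relative to the finite set `F`: this is `{x}` when
`x ∈ F`, and the connected component of `x` in the complement of `F` otherwise. -/
def cell {R : Type*} [LinearOrder R] (F : Finset R) (x : R) : Set R :=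
  {z | ∀ b ∈ F, cmp b z = cmp b x}

section LinearOrder

variable {R : Type*} [LinearOrder R] {F : Finset R} {x z : R}

theorem ordConnected_cell : (cell F x).OrdConnected := by
  refine ⟨fun u hu v hv z hz b hb => ?_⟩
  rcases lt_trichotomy b z with hbz | rfl | hzb
  · rw [hbz.cmp_eq_lt, ((lt_iff_lt_of_cmp_eq_cmp (hv b hb)).1 (hbz.trans_le hz.2)).cmp_eq_lt]
  · have hxb : x ≤ b := (le_iff_le_of_cmp_eq_cmp (cmp_eq_cmp_symm.1 (hu b hb))).1 hz.1
    have hbx : b ≤ x := (le_iff_le_of_cmp_eq_cmp (hv b hb)).1 hz.2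
    rw [hbx.antisymm hxb]
  · have hub := (lt_iff_lt_of_cmp_eq_cmp (cmp_eq_cmp_symm.1 (hu b hb))).1 (hz.1.trans_lt hzb)
    rw [hzb.cmp_eq_gt, hub.cmp_eq_gt]

theorem mem_cell_of_forall_lt (hx : x ∉ F) (hxz : x ≤ z) (h : ∀ b ∈ F, x < b → z < b) :
    z ∈ cell F x := by
  intro b hb
  rcases lt_trichotomy b x with hbx | rfl | hbx
  · rw [hbx.cmp_eq_lt, (hbx.trans_le hxz).cmp_eq_lt]
  · exact absurd hb hx
  · rw [hbx.cmp_eq_gt, (h b hb hbx).cmp_eq_gt]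

theorem infinite_cell [DenselyOrdered R] [NoMinOrder R] [NoMaxOrder R] (hx : x ∉ F) :
    (cell F x).Infinite := by
  have : Nonempty R := ⟨x⟩
  obtain ⟨w, hxw, hw⟩ := Order.exists_between_finsets {x} {b ∈ F | x < b} (by simp)
  simp only [Finset.mem_singleton, forall_eq, Finset.mem_filter, and_imp] at hxw hw
  exact (Ioo_infinite hxw).mono fun z hz =>
    mem_cell_of_forall_lt hx hz.1.le fun b hb hxb => hz.2.trans (hw b hb hxb)

end LinearOrder

theorem cmp_neg_neg {R : Type*} [AddCommGroup R] [LinearOrder R] [IsOrderedAddMonoid R] (a b : R) :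
    cmp (-a) (-b) = cmp b a := by
  simp [cmp, cmpUsing]

theorem neg_mem_cell_image_neg {R : Type*} [AddCommGroup R] [LinearOrder R] [IsOrderedAddMonoid R]
    {F : Finset R} {x z : R} : -z ∈ cell (F.image Neg.neg) (-x) ↔ z ∈ cell F x := by
  simp only [cell, mem_ofPred_eq, Finset.forall_mem_image, cmp_neg_neg]
  exact forall₂_congr fun b _ => cmp_eq_cmp_symm

variable {R : Type*} [Field R] [LinearOrder R] [IsStrictOrderedRing R] {p : R[X]} {F : Finset R}
  {x : R}

theorem eval_ne_zero_of_sign_eq_on_cell (hp : p ≠ 0) (hx : x ∉ F)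
    (hsign : ∀ z ∈ cell F x, SignType.sign (p.eval z) = SignType.sign (p.eval x)) :
    p.eval x ≠ 0 := by
  intro hroot
  refine infinite_cell hx (p.roots.toFinset.finite_toSet.subset fun z hz => ?_)
  have := hsign z hz
  rw [hroot, sign_zero, sign_eq_zero_iff] at this
  simpa [hp] using this

variable [PolynomialIVP R]

theorem injOn_eval_cell (h : ∀ z ∈ cell F x, (derivative p).eval z ≠ 0) :
    InjOn p.eval (cell F x) := by
  intro u hu v hv huv
  by_contra hne
  wlog hlt : u < v generalizing u v
  · exact this hv hu huv.symm (Ne.symm hne) (lt_of_le_of_ne (not_lt.1 hlt) (Ne.symm hne))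
  obtain ⟨c, hc, hc0⟩ := exists_eval_derivative_eq_zero hlt huv
  exact h c (ordConnected_cell.out hu hv (Ioo_subset_Icc_self hc)) hc0

theorem exists_gt_eval_pos (hdeg : 0 < p.degree) (h : ∀ z, x < z → 0 < (derivative p).eval z) :
    ∃ z > x, 0 < p.eval z := by
  have hlead : 0 < p.leadingCoeff := by
    by_contra! hneg
    have hneg : p.leadingCoeff < 0 :=
      hneg.lt_of_ne (leadingCoeff_ne_zero.2 (ne_zero_of_degree_gt hdeg))
    have htend := tendsto_eval_atTop (p := -p) (by rwa [degree_neg])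
      (by rwa [leadingCoeff_neg, neg_pos])
    obtain ⟨z, hz, hxz⟩ :=
      ((htend.eventually_gt_atTop (-p.eval x)).and (Filter.eventually_gt_atTop x)).exists
    rw [eval_neg, neg_lt_neg_iff] at hz
    exact hz.not_gt (eval_lt_eval_of_derivative_pos hxz fun c hc => h c hc.1)
  obtain ⟨z, hz, hxz⟩ := (((tendsto_eval_atTop hdeg hlead).eventually_gt_atTop 0).and
    (Filter.eventually_gt_atTop x)).exists
  exact ⟨z, hxz, hz⟩

theorem exists_mem_cell_ge_eval_eq_zero (hdeg : 0 < p.degree) (hx : x ∉ F)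
    (hderiv : ∀ z ∈ cell F x, 0 < (derivative p).eval z) (hpx : p.eval x ≤ 0)
    (hsucc : ∀ b ∈ F, x < b → (∀ c ∈ F, x < c → b ≤ c) → 0 < p.eval b) :
    ∃ z ∈ cell F x, x ≤ z ∧ p.eval z = 0 := by
  suffices h : ∃ w, x ≤ w ∧ 0 < p.eval w ∧ Ico x w ⊆ cell F x by
    obtain ⟨w, hxw, hw, hcell⟩ := h
    obtain ⟨z, hz, hroot⟩ := exists_mem_Icc_eval_eq_zero hxw hpx hw.le
    have hzw : z < w := hz.2.lt_of_ne (by rintro rfl; exact hw.ne' hroot)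
    exact ⟨z, hcell ⟨hz.1, hzw⟩, hz.1, hroot⟩
  rcases ({b ∈ F | x < b} : Finset R).eq_empty_or_nonempty with hnone | hne
  · have hcell : Ici x ⊆ cell F x := fun z hz => mem_cell_of_forall_lt hx hz fun b hb hxb =>
      absurd hxb (Finset.filter_eq_empty_iff.1 hnone hb)
    obtain ⟨w, hxw, hw⟩ := exists_gt_eval_pos hdeg fun z hz => hderiv z (hcell hz.le)
    exact ⟨w, hxw.le, hw, Ico_subset_Ici_self.trans hcell⟩
  · obtain ⟨b, hb⟩ := Finset.exists_minimal hne
    obtain ⟨hbF, hxb⟩ := Finset.mem_filter.1 hb.1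
    have hmin : ∀ c ∈ F, x < c → b ≤ c := fun c hc hxc =>
      (le_total b c).elim id (hb.2 (Finset.mem_filter.2 ⟨hc, hxc⟩))
    exact ⟨b, hxb.le, hsucc b hbF hxb hmin, fun z hz =>
      mem_cell_of_forall_lt hx hz.1 fun c hc hxc => hz.2.trans_le (hmin c hc hxc)⟩

theorem exists_mem_cell_le_eval_eq_zero (hdeg : 0 < p.degree) (hx : x ∉ F)
    (hderiv : ∀ z ∈ cell F x, 0 < (derivative p).eval z) (hpx : 0 ≤ p.eval x)
    (hpred : ∀ b ∈ F, b < x → (∀ c ∈ F, c < x → c ≤ b) → p.eval b < 0) :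
    ∃ z ∈ cell F x, z ≤ x ∧ p.eval z = 0 := by
  obtain ⟨z, hz, hxz, hroot⟩ := exists_mem_cell_ge_eval_eq_zero (p := -p.comp (-X))
    (F := F.image Neg.neg) (x := -x) (by rwa [degree_neg, degree_comp_neg_X]) (by simpa using hx)
    (fun z hz => by
      have := hderiv (-z) (neg_mem_cell_image_neg.1 (by rwa [neg_neg]))
      simpa [derivative_comp] using this)
    (by simpa using hpx) (by
      simp only [Finset.forall_mem_image, neg_lt_neg_iff, neg_le_neg_iff]
      intro b hb hbx hmax
      simpa using hpred b hb hbx hmax)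
  exact ⟨-z, neg_mem_cell_image_neg.1 (by rwa [neg_neg]), neg_le.1 hxz, by simpa using hroot⟩

end Cell

section PartialIso

open Order Polynomial Set

section LinearOrder

variable {R S : Type*} [LinearOrder R] [LinearOrder S] {T T' : PartialIso R S} {x z : R} {y w : S}
  {t : R × S}

/-- `x` lies relative to the left-hand points of `T` as `y` does relative to the right-hand ones. -/
def SamePosition (T : PartialIso R S) (x : R) (y : S) : Prop :=
  ∀ t ∈ T.val, cmp t.1 x = cmp t.2 y

theorem samePosition_of_mem (ht : t ∈ T.val) : SamePosition T t.1 t.2 :=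
  fun s hs => T.prop s hs t ht

theorem samePosition_comm : SamePosition T.comm y x ↔ SamePosition T x y := by
  simp only [SamePosition, PartialIso.comm, Subtype.map, Finset.forall_mem_image,
    Equiv.prodComm_apply, Prod.fst_swap, Prod.snd_swap]
  exact forall₂_congr fun _ _ => eq_comm

theorem mem_val_comm : (y, x) ∈ T.comm.val ↔ (x, y) ∈ T.val := by
  simp [PartialIso.comm, Subtype.map]

theorem SamePosition.mono (hT : T ≤ T') (h : SamePosition T' x y) : SamePosition T x y :=
  fun t ht => h t (hT ht)

theorem samePosition_iff_mem_cell (h : SamePosition T x y) :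
    SamePosition T z y ↔ z ∈ cell (T.val.image Prod.fst) x := by
  simp only [cell, mem_ofPred_eq, Finset.forall_mem_image]
  exact forall₂_congr fun t ht => by rw [h t ht]

theorem SamePosition.mem_of_mem_image (h : SamePosition T x y) (hx : x ∈ T.val.image Prod.fst) :
    (x, y) ∈ T.val := by
  obtain ⟨t, ht, rfl⟩ := Finset.mem_image.1 hx
  rwa [← (eq_iff_eq_of_cmp_eq_cmp (h t ht)).1 rfl]

theorem SamePosition.of_mem_Ioo_left (h : SamePosition T x y) (hx : x ∉ T.val.image Prod.fst)
    (ht : t ∈ T.val) (hmax : ∀ s ∈ T.val, s.1 < x → s.1 ≤ t.1) (hw : w ∈ Ioo t.2 y) :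
    SamePosition T x w := by
  intro s hs
  rcases lt_trichotomy s.1 x with hsx | rfl | hxs
  · have hst : s.2 ≤ t.2 := (le_iff_le_of_cmp_eq_cmp (T.prop s hs t ht)).1 (hmax s hs hsx)
    rw [hsx.cmp_eq_lt, (hst.trans_lt hw.1).cmp_eq_lt]
  · exact absurd (Finset.mem_image_of_mem _ hs) hx
  · have hys : y < s.2 := (lt_iff_lt_of_cmp_eq_cmp (cmp_eq_cmp_symm.1 (h s hs))).1 hxs
    rw [hxs.cmp_eq_gt, (hw.2.trans hys).cmp_eq_gt]

theorem SamePosition.of_mem_Ioo_right (h : SamePosition T x y) (hx : x ∉ T.val.image Prod.fst)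
    (ht : t ∈ T.val) (hmin : ∀ s ∈ T.val, x < s.1 → t.1 ≤ s.1) (hw : w ∈ Ioo y t.2) :
    SamePosition T x w := by
  intro s hs
  rcases lt_trichotomy s.1 x with hsx | rfl | hxs
  · have hsy : s.2 < y := (lt_iff_lt_of_cmp_eq_cmp (h s hs)).1 hsx
    rw [hsx.cmp_eq_lt, (hsy.trans hw.1).cmp_eq_lt]
  · exact absurd (Finset.mem_image_of_mem _ hs) hx
  · have hts : t.2 ≤ s.2 := (le_iff_le_of_cmp_eq_cmp (T.prop t ht s hs)).1 (hmin s hs hxs)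
    rw [hxs.cmp_eq_gt, (hw.2.trans_le hts).cmp_eq_gt]

end LinearOrder

variable {R : Type*} [Field R] [LinearOrder R] {S : Type*} [Field S] [LinearOrder S]
  {T T' : PartialIso R S} {P : R[X]} {Q : S[X]} {x : R} {y : S}

/-- `P` and `Q` have the same sign at any two points in the same position with respect to `T`. -/
def SignAgree (T : PartialIso R S) (P : R[X]) (Q : S[X]) : Prop :=
  ∀ ⦃x y⦄, SamePosition T x y → SignType.sign (P.eval x) = SignType.sign (Q.eval y)

theorem SignAgree.comm (h : SignAgree T P Q) : SignAgree T.comm Q P :=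
  fun _ _ hyx => (h (samePosition_comm.1 hyx)).symm

theorem SignAgree.mono (hT : T ≤ T') (h : SignAgree T P Q) : SignAgree T' P Q :=
  fun _ _ hxy => h (hxy.mono hT)

/-- `T'` arises from `T` by adding all pairs of a root of `P` and a root of `Q` that are in the same
position with respect to `T`. -/
structure IsRootExtension (T T' : PartialIso R S) (P : R[X]) (Q : S[X]) : Prop where
  le : T ≤ T'
  root : ∀ t ∈ T'.val, t ∉ T.val → P.eval t.1 = 0 ∧ Q.eval t.2 = 0
  mem : ∀ ⦃u v⦄, SamePosition T u v → P.eval u = 0 → Q.eval v = 0 → (u, v) ∈ T'.val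

theorem IsRootExtension.comm (h : IsRootExtension T T' P Q) :
    IsRootExtension T.comm T'.comm Q P where
  le _ ht := mem_val_comm.2 (h.le (mem_val_comm.1 ht))
  root t ht htT := (h.root (t.2, t.1) (mem_val_comm.1 ht) (mt mem_val_comm.2 htT)).symm
  mem _ _ huv hu hv := mem_val_comm.2 (h.mem (samePosition_comm.1 huv) hv hu)

theorem IsRootExtension.neg (h : IsRootExtension T T' P Q) : IsRootExtension T T' (-P) (-Q) where
  le := h.le
  root t ht htT := by simpa using h.root t ht htT
  mem u v huv hu hv := h.mem huv (by simpa using hu) (by simpa using hv)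

variable [IsStrictOrderedRing R]

theorem SignAgree.eval_ne_zero (h : SignAgree T P Q) (hP : P ≠ 0) (hxy : SamePosition T x y)
    (hmem : (x, y) ∉ T.val) : P.eval x ≠ 0 :=
  eval_ne_zero_of_sign_eq_on_cell hP (mt hxy.mem_of_mem_image hmem) fun _ hz =>
    (h ((samePosition_iff_mem_cell hxy).2 hz)).trans (h hxy).symm

theorem SignAgree.neg [IsStrictOrderedRing S] (h : SignAgree T P Q) : SignAgree T (-P) (-Q) :=
  fun _ _ hxy => by simp only [eval_neg, Left.sign_neg, h hxy]

theorem derivative_ne_zero_of_degree_pos {R : Type*} [Semiring R] [IsAddTorsionFree R]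
    {p : R[X]} (hdeg : 0 < p.degree) : derivative p ≠ 0 :=
  derivative_ne_zero.2 (natDegree_pos_iff_degree_pos.2 hdeg).ne'

variable [PolynomialIVP R]

theorem SignAgree.lt_of_root_lt_root (hderiv : SignAgree T (derivative P) (derivative Q))
    (hdeg : 0 < P.degree) {u u' : R} {v v' : S} (huv : SamePosition T u v)
    (huv' : SamePosition T u' v') (hu : P.eval u = 0) (hu' : P.eval u' = 0) (hlt : u < u') :
    v < v' := by
  by_cases hsame : SamePosition T u' v
  · have hmem (z : R) : (z, v) ∉ T.val := fun hz =>
      hlt.ne (((eq_iff_eq_of_cmp_eq_cmp (huv _ hz)).2 rfl).symm.trans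
        ((eq_iff_eq_of_cmp_eq_cmp (hsame _ hz)).2 rfl))
    have hinj : InjOn P.eval (cell (T.val.image Prod.fst) u) := injOn_eval_cell fun z hz =>
      hderiv.eval_ne_zero (derivative_ne_zero_of_degree_pos hdeg)
        ((samePosition_iff_mem_cell huv).2 hz) (hmem z)
    exact absurd (hinj (fun _ _ => rfl) ((samePosition_iff_mem_cell huv).1 hsame)
      (hu.trans hu'.symm)) hlt.ne
  · by_contra! hle
    refine hsame fun t ht => ?_
    rw [huv' t ht]
    rcases lt_or_ge t.2 v' with htv' | hv't
    · rw [htv'.cmp_eq_lt, (htv'.trans_le hle).cmp_eq_lt]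
    have hu't : u' ≤ t.1 := (le_iff_le_of_cmp_eq_cmp (cmp_eq_cmp_symm.1 (huv' t ht))).2 hv't
    have hvt : v < t.2 :=
      (lt_iff_lt_of_cmp_eq_cmp (cmp_eq_cmp_symm.1 (huv t ht))).1 (hlt.trans_le hu't)
    rw [hvt.cmp_eq_gt, (hle.trans_lt hvt).cmp_eq_gt]

variable [IsStrictOrderedRing S] [PolynomialIVP S]

theorem exists_root_le_of_samePosition (hdeg : 0 < P.degree)
    (hT : ∀ t ∈ T.val, SignType.sign (P.eval t.1) = SignType.sign (Q.eval t.2))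
    (hxy : SamePosition T x y) (hmem : (x, y) ∉ T.val)
    (hP : ∀ z, SamePosition T z y → 0 < (derivative P).eval z)
    (hQ : ∀ w, SamePosition T x w → 0 < (derivative Q).eval w)
    (hPx : 0 ≤ P.eval x) (hQy : Q.eval y ≤ 0) :
    ∃ u ≤ x, SamePosition T u y ∧ P.eval u = 0 := by
  have hx := mt hxy.mem_of_mem_image hmem
  obtain ⟨u, hu, hux, hroot⟩ := exists_mem_cell_le_eval_eq_zero hdeg hx
    (fun z hz => hP z ((samePosition_iff_mem_cell hxy).2 hz)) hPx (by
      simp only [Finset.forall_mem_image]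
      intro t ht htx hmax
      have hQt : Q.eval t.2 < Q.eval y :=
        eval_lt_eval_of_derivative_pos ((lt_iff_lt_of_cmp_eq_cmp (hxy t ht)).1 htx)
          fun w hw => hQ w (hxy.of_mem_Ioo_left hx ht (@hmax) hw)
      rw [← sign_eq_neg_one_iff, hT t ht, sign_eq_neg_one_iff]
      exact hQt.trans_le hQy)
  exact ⟨u, hux, (samePosition_iff_mem_cell hxy).2 hu, hroot⟩

theorem exists_root_ge_of_samePosition (hdeg : 0 < P.degree)
    (hT : ∀ t ∈ T.val, SignType.sign (P.eval t.1) = SignType.sign (Q.eval t.2))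
    (hxy : SamePosition T x y) (hmem : (x, y) ∉ T.val)
    (hP : ∀ z, SamePosition T z y → 0 < (derivative P).eval z)
    (hQ : ∀ w, SamePosition T x w → 0 < (derivative Q).eval w)
    (hPx : P.eval x ≤ 0) (hQy : 0 ≤ Q.eval y) :
    ∃ u ≥ x, SamePosition T u y ∧ P.eval u = 0 := by
  have hx := mt hxy.mem_of_mem_image hmem
  obtain ⟨u, hu, hxu, hroot⟩ := exists_mem_cell_ge_eval_eq_zero hdeg hx
    (fun z hz => hP z ((samePosition_iff_mem_cell hxy).2 hz)) hPx (by
      simp only [Finset.forall_mem_image]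
      intro t ht hxt hmin
      have hQt : Q.eval y < Q.eval t.2 :=
        eval_lt_eval_of_derivative_pos
          ((lt_iff_lt_of_cmp_eq_cmp (cmp_eq_cmp_symm.1 (hxy t ht))).1 hxt)
          fun w hw => hQ w (hxy.of_mem_Ioo_right hx ht (@hmin) hw)
      rw [← sign_eq_one_iff, hT t ht, sign_eq_one_iff]
      exact hQy.trans_lt hQt)
  exact ⟨u, hxu, (samePosition_iff_mem_cell hxy).2 hu, hroot⟩

theorem IsRootExtension.eval_eq_zero_of_nonneg_of_nonpos (h : IsRootExtension T T' P Q)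
    (hdegP : 0 < P.degree) (hdegQ : 0 < Q.degree)
    (hT : ∀ t ∈ T.val, SignType.sign (P.eval t.1) = SignType.sign (Q.eval t.2))
    (hxy : SamePosition T' x y) (hmem : (x, y) ∉ T.val)
    (hP : ∀ z, SamePosition T z y → 0 < (derivative P).eval z)
    (hQ : ∀ w, SamePosition T x w → 0 < (derivative Q).eval w)
    (hPx : 0 ≤ P.eval x) (hQy : Q.eval y ≤ 0) : P.eval x = 0 ∧ Q.eval y = 0 := by
  have hxyT : SamePosition T x y := hxy.mono h.le
  obtain ⟨u, hux, huy, hPu⟩ := exists_root_le_of_samePosition hdegP hT hxyT hmem hP hQ hPx hQy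
  obtain ⟨v, hyv, hxv, hQv⟩ := exists_root_ge_of_samePosition (T := T.comm) hdegQ
    (fun t ht => (hT (t.2, t.1) (mem_val_comm.1 ht)).symm) (samePosition_comm.2 hxyT)
    (mt mem_val_comm.1 hmem) (fun w hw => hQ w (samePosition_comm.1 hw))
    (fun z hz => hP z (samePosition_comm.1 hz)) hQy hPx
  rw [samePosition_comm] at hxv
  have huv : SamePosition T u v := fun t ht =>
    (huy t ht).trans ((hxyT t ht).symm.trans (hxv t ht))
  have hcmp : cmp u x = cmp v y := hxy (u, v) (h.mem huv hPu hQv)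
  have hxu : x ≤ u := (le_iff_le_of_cmp_eq_cmp (cmp_eq_cmp_symm.1 hcmp)).2 hyv
  obtain rfl : u = x := hux.antisymm hxu
  obtain rfl : v = y := (eq_iff_eq_of_cmp_eq_cmp hcmp).1 rfl
  exact ⟨hPu, hQv⟩

theorem IsRootExtension.sign_eq_of_derivative_pos (h : IsRootExtension T T' P Q)
    (hdegP : 0 < P.degree) (hdegQ : 0 < Q.degree)
    (hT : ∀ t ∈ T.val, SignType.sign (P.eval t.1) = SignType.sign (Q.eval t.2))
    (hderiv : SignAgree T (derivative P) (derivative Q))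
    (hxy : SamePosition T' x y) (hmem : (x, y) ∉ T.val) (hpos : 0 < (derivative P).eval x) :
    SignType.sign (P.eval x) = SignType.sign (Q.eval y) := by
  have hxyT : SamePosition T x y := hxy.mono h.le
  have hQ : ∀ w, SamePosition T x w → 0 < (derivative Q).eval w := fun w hw => by
    rwa [← sign_eq_one_iff, ← hderiv hw, sign_eq_one_iff]
  have hP : ∀ z, SamePosition T z y → 0 < (derivative P).eval z := fun z hz => by
    rw [← sign_eq_one_iff, hderiv hz, sign_eq_one_iff]
    exact hQ y hxyT
  have hPQ := h.eval_eq_zero_of_nonneg_of_nonpos hdegP hdegQ hT hxy hmem hP hQ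
  have hQP := h.comm.eval_eq_zero_of_nonneg_of_nonpos hdegQ hdegP
    (fun t ht => (hT (t.2, t.1) (mem_val_comm.1 ht)).symm) (samePosition_comm.2 hxy)
    (mt mem_val_comm.1 hmem) (fun w hw => hQ w (samePosition_comm.1 hw))
    (fun z hz => hP z (samePosition_comm.1 hz))
  rcases lt_trichotomy (P.eval x) 0 with hPx | hPx | hPx <;>
    rcases lt_trichotomy (Q.eval y) 0 with hQy | hQy | hQy
  all_goals grind [sign_pos, sign_neg, sign_zero]

theorem IsRootExtension.signAgree (h : IsRootExtension T T' P Q)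
    (hdegP : 0 < P.degree) (hdegQ : 0 < Q.degree)
    (hT : ∀ t ∈ T.val, SignType.sign (P.eval t.1) = SignType.sign (Q.eval t.2))
    (hderiv : SignAgree T (derivative P) (derivative Q)) : SignAgree T' P Q := by
  intro x y hxy
  by_cases hmem : (x, y) ∈ T.val
  · exact hT _ hmem
  have hne := hderiv.eval_ne_zero (derivative_ne_zero_of_degree_pos hdegP) (hxy.mono h.le) hmem
  rcases hne.lt_or_gt with hneg | hpos
  · have := h.neg.sign_eq_of_derivative_pos (by rwa [degree_neg]) (by rwa [degree_neg])
      (fun t ht => by simp only [eval_neg, Left.sign_neg, hT t ht])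
      (by simpa only [derivative_neg] using hderiv.neg) hxy hmem (by simpa using hneg)
    simpa only [eval_neg, Left.sign_neg, neg_inj] using this
  · exact h.sign_eq_of_derivative_pos hdegP hdegQ hT hderiv hxy hmem hpos

theorem exists_isRootExtension (hderiv : SignAgree T (derivative P) (derivative Q))
    (hdegP : 0 < P.degree) (hdegQ : 0 < Q.degree) : ∃ T', IsRootExtension T T' P Q := by
  classical
  let newPairs := {t ∈ P.roots.toFinset ×ˢ Q.roots.toFinset | SamePosition T t.1 t.2}
  have hnew {t} : t ∈ newPairs ↔ SamePosition T t.1 t.2 ∧ P.eval t.1 = 0 ∧ Q.eval t.2 = 0 := by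
    simp [newPairs, ne_zero_of_degree_gt hdegP, ne_zero_of_degree_gt hdegQ, and_comm]
  have hlt {s t} (hs : s ∈ newPairs) (ht : t ∈ newPairs) : s.1 < t.1 ↔ s.2 < t.2 := by
    rw [hnew] at hs ht
    exact ⟨hderiv.lt_of_root_lt_root hdegP hs.1 ht.1 hs.2.1 ht.2.1,
      hderiv.comm.lt_of_root_lt_root hdegQ (samePosition_comm.2 hs.1) (samePosition_comm.2 ht.1)
        hs.2.2 ht.2.2⟩
  refine ⟨⟨T.val ∪ newPairs, fun s hs t ht => ?_⟩, Finset.subset_union_left, fun t ht htT => ?_,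
    fun u v huv hu hv => Finset.mem_union_right _ (hnew.2 ⟨huv, hu, hv⟩)⟩
  · rcases Finset.mem_union.1 hs with hsT | hs <;> rcases Finset.mem_union.1 ht with htT | ht
    · exact T.prop s hsT t htT
    · exact (hnew.1 ht).1 s hsT
    · exact cmp_eq_cmp_symm.1 ((hnew.1 hs).1 t htT)
    · simp only [cmp, cmpUsing, hlt hs ht, hlt ht hs]
  · exact (hnew.1 ((Finset.mem_union.1 ht).resolve_left htT)).2

end PartialIso

section Elimination

open Polynomial

section Closure

variable {α : Type*} (rank : α → ℕ) (op : α → α → Finset α)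

theorem exists_closed_superset_of_closed_above
    (hop : ∀ p q, ∀ r ∈ op p q, rank r < rank q) (n : ℕ) (L : Finset α)
    (hL : ∀ p ∈ L, ∀ q ∈ L, n ≤ rank q → rank q ≤ rank p → op p q ⊆ L) :
    ∃ L', L ⊆ L' ∧ ∀ p ∈ L', ∀ q ∈ L', rank q ≤ rank p → op p q ⊆ L' := by
  classical
  induction n generalizing L with
  | zero => exact ⟨L, subset_rfl, fun p hp q hq => hL p hp q hq (rank q).zero_le⟩
  | succ n ih =>
    let new := {q ∈ L | rank q = n}.biUnion fun q => L.biUnion fun p => op p q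
    have mem_of_le {r : α} (hr : r ∈ L ∪ new) (hn : n ≤ rank r) : r ∈ L := by
      refine (Finset.mem_union.1 hr).resolve_right fun hr => ?_
      simp only [new, Finset.mem_biUnion, Finset.mem_filter] at hr
      obtain ⟨q, ⟨-, hq⟩, p, -, hr⟩ := hr
      exact ((hop p q r hr).trans_le hq.le).not_ge hn
    obtain ⟨L', hL', hclosed⟩ := ih (L ∪ new) fun p hp q hq hn hqp => by
      have hpL := mem_of_le hp (hn.trans hqp)
      have hqL := mem_of_le hq hn
      rcases hn.eq_or_lt with hn | hn
      · exact fun r hr => Finset.mem_union_right _ <| Finset.mem_biUnion.2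
          ⟨q, Finset.mem_filter.2 ⟨hqL, hn.symm⟩, Finset.mem_biUnion.2 ⟨p, hpL, hr⟩⟩
      · exact (hL p hpL q hqL hn hqp).trans Finset.subset_union_left
    exact ⟨L', Finset.subset_union_left.trans hL', hclosed⟩

theorem exists_closed_superset (hop : ∀ p q, ∀ r ∈ op p q, rank r < rank q) (L : Finset α) :
    ∃ L', L ⊆ L' ∧ ∀ p ∈ L', ∀ q ∈ L', rank q ≤ rank p → op p q ⊆ L' :=
  exists_closed_superset_of_closed_above rank op hop (L.sup rank + 1) L
    fun _ _ _ hq hn => absurd hn (Nat.lt_succ_of_le (Finset.le_sup hq)).not_ge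

end Closure

variable {k : Type*} [CommRing k]

/-- The pseudo-remainder of `p` by `q`: cancel leading terms, multiplying by the leading coefficient
of `q` instead of dividing by it. It is `p` itself when `q` is constant. -/
noncomputable def pseudoRem (p q : k[X]) : k[X] :=
  if 0 < q.natDegree ∧ q.natDegree ≤ p.natDegree then pseudoRem (q.cancelLeads p) q else p
termination_by p.natDegree
decreasing_by
  rename_i h
  exact natDegree_cancelLeads_lt_of_natDegree_le_natDegree h.2 (h.1.trans_le h.2)

theorem natDegree_pseudoRem_lt (p : k[X]) {q : k[X]} (hq : 0 < q.natDegree) :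
    (pseudoRem p q).natDegree < q.natDegree := by
  fun_induction pseudoRem p q with
  | case1 _ _ ih => exact ih
  | case2 p h => exact not_le.1 fun hle => h ⟨hq, hle⟩

theorem exists_leadingCoeff_pow_mul_eq_add_pseudoRem (p q : k[X]) :
    ∃ (N : ℕ) (s : k[X]), C q.leadingCoeff ^ N * p = q * s + pseudoRem p q := by
  fun_induction pseudoRem p q with
  | case1 p h ih =>
    obtain ⟨N, s, hs⟩ := ih
    refine ⟨N + 1, C q.leadingCoeff ^ N * (C p.leadingCoeff * X ^ (p.natDegree - q.natDegree)) + s,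
      ?_⟩
    have hcancel : q.cancelLeads p = C q.leadingCoeff * p -
        C p.leadingCoeff * X ^ (p.natDegree - q.natDegree) * q := by
      rw [cancelLeads, Nat.sub_eq_zero_of_le h.2, pow_zero, mul_one]
    linear_combination hs - C q.leadingCoeff ^ N * hcancel
  | case2 => exact ⟨0, 0, by simp⟩

/-- Closure under the operations that determine the sign of a polynomial from the signs of
polynomials of lower degree. -/
def EliminationClosed (L : Finset k[X]) : Prop :=
  ∀ p ∈ L, ∀ q ∈ L, 0 < q.natDegree → q.natDegree ≤ p.natDegree →
    pseudoRem p q ∈ L ∧ derivative q ∈ L ∧ q.eraseLead ∈ L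

theorem natDegree_eraseLead_lt {q : k[X]} (hq : 0 < q.natDegree) :
    q.eraseLead.natDegree < q.natDegree :=
  q.eraseLead_natDegree_le.trans_lt (Nat.sub_lt hq one_pos)

theorem exists_eliminationClosed (L : Finset k[X]) : ∃ L', L ⊆ L' ∧ EliminationClosed L' := by
  classical
  let op (p q : k[X]) : Finset k[X] :=
    if 0 < q.natDegree then {pseudoRem p q, derivative q, q.eraseLead} else ∅
  obtain ⟨L', hL, hL'⟩ := exists_closed_superset natDegree op (fun p q r hr => by
    by_cases hq : 0 < q.natDegree
    · simp only [op, hq, if_true, Finset.mem_insert, Finset.mem_singleton] at hr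
      rcases hr with rfl | rfl | rfl
      · exact natDegree_pseudoRem_lt p hq
      · exact natDegree_derivative_lt hq.ne'
      · exact natDegree_eraseLead_lt hq
    · simp [op, hq] at hr) L
  refine ⟨L', hL, fun p hp q hq hdeg hle => ?_⟩
  simpa [op, hdeg, Finset.insert_subset_iff] using hL' p hp q hq hle

theorem EliminationClosed.of_insert [DecidableEq k[X]] {p : k[X]} {L : Finset k[X]}
    (h : EliminationClosed (insert p L)) (hmax : ∀ q ∈ L, q.natDegree ≤ p.natDegree) :
    EliminationClosed L := by
  intro r hr q hq hdeg hle
  have mem_of_lt {s : k[X]} (hs : s ∈ insert p L) (hlt : s.natDegree < q.natDegree) : s ∈ L :=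
    (Finset.mem_insert.1 hs).resolve_left (by rintro rfl; exact hlt.not_ge (hmax q hq))
  obtain ⟨hrem, hderiv, herase⟩ :=
    h r (Finset.mem_insert_of_mem hr) q (Finset.mem_insert_of_mem hq) hdeg hle
  exact ⟨mem_of_lt hrem (natDegree_pseudoRem_lt r hdeg),
    mem_of_lt hderiv (natDegree_derivative_lt hdeg.ne'),
    mem_of_lt herase (natDegree_eraseLead_lt hdeg)⟩

theorem map_eraseLead_of_map_leadingCoeff_eq_zero {R : Type*} [CommRing R] {φ : k →+* R} {p : k[X]}
    (h : φ p.leadingCoeff = 0) : p.eraseLead.map φ = p.map φ := by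
  rw [← self_sub_C_mul_X_pow, Polynomial.map_sub, Polynomial.map_mul, map_C, h, C_0, zero_mul,
    sub_zero]

variable {R : Type*} [Field R] [LinearOrder R] {S : Type*} [Field S] [LinearOrder S]
  {φ : k →+* R} {χ : k →+* S} {p q : k[X]} {x : R} {y : S} {L : Finset k[X]}
  {T : Order.PartialIso R S}

/-- `T` determines the signs of all polynomials of `L`, under the specialisations `φ` and `χ` of
their coefficients, and consists of roots of polynomials of `L`. -/
structure IsSignTable (φ : k →+* R) (χ : k →+* S) (L : Finset k[X]) (T : Order.PartialIso R S) :
    Prop where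
  signAgree : ∀ p ∈ L, SignAgree T (p.map φ) (p.map χ)
  exists_root : ∀ t ∈ T.val, ∃ q ∈ L, 0 < q.natDegree ∧ φ q.leadingCoeff ≠ 0 ∧
    (q.map φ).eval t.1 = 0 ∧ (q.map χ).eval t.2 = 0

theorem IsSignTable.insert_of_signAgree [DecidableEq k[X]] (h : IsSignTable φ χ L T)
    (hp : SignAgree T (p.map φ) (p.map χ)) : IsSignTable φ χ (insert p L) T where
  signAgree := Finset.forall_mem_insert _ _ _ |>.2 ⟨hp, h.signAgree⟩
  exists_root t ht := by
    obtain ⟨q, hq, hroot⟩ := h.exists_root t ht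
    exact ⟨q, Finset.mem_insert_of_mem hq, hroot⟩

variable [IsStrictOrderedRing R] [IsStrictOrderedRing S]

theorem sign_eval_eq_of_sign_eval_pseudoRem_eq
    (hlc : SignType.sign (φ q.leadingCoeff) = SignType.sign (χ q.leadingCoeff))
    (hlc0 : φ q.leadingCoeff ≠ 0) (hx : (q.map φ).eval x = 0) (hy : (q.map χ).eval y = 0)
    (h : SignType.sign (((pseudoRem p q).map φ).eval x) =
      SignType.sign (((pseudoRem p q).map χ).eval y)) :
    SignType.sign ((p.map φ).eval x) = SignType.sign ((p.map χ).eval y) := by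
  obtain ⟨N, s, hs⟩ := exists_leadingCoeff_pow_mul_eq_add_pseudoRem p q
  have hR : φ q.leadingCoeff ^ N * (p.map φ).eval x = ((pseudoRem p q).map φ).eval x := by
    simpa [hx] using congrArg (fun r => (r.map φ).eval x) hs
  have hS : χ q.leadingCoeff ^ N * (p.map χ).eval y = ((pseudoRem p q).map χ).eval y := by
    simpa [hy] using congrArg (fun r => (r.map χ).eval y) hs
  rw [← hR, ← hS, sign_mul, sign_mul, sign_pow, sign_pow, ← hlc] at h
  exact mul_left_cancel₀ (pow_ne_zero N (sign_ne_zero.2 hlc0)) h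

theorem IsSignTable.sign_eval_eq (h : IsSignTable φ χ L T)
    (hlc : ∀ q ∈ L, SignType.sign (φ q.leadingCoeff) = SignType.sign (χ q.leadingCoeff))
    (hrem : ∀ q ∈ L, 0 < q.natDegree → pseudoRem p q ∈ L) :
    ∀ t ∈ T.val, SignType.sign ((p.map φ).eval t.1) = SignType.sign ((p.map χ).eval t.2) := by
  intro t ht
  obtain ⟨q, hq, hdeg, hne, hx, hy⟩ := h.exists_root t ht
  exact sign_eval_eq_of_sign_eval_pseudoRem_eq (hlc q hq) hne hx hy
    (h.signAgree _ (hrem q hq hdeg) (samePosition_of_mem ht))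

variable [PolynomialIVP R] [PolynomialIVP S]

theorem IsSignTable.exists_insert [DecidableEq k[X]] (h : IsSignTable φ χ L T)
    (hdeg : 0 < p.natDegree) (hφ : φ p.leadingCoeff ≠ 0) (hχ : χ p.leadingCoeff ≠ 0)
    (hT : ∀ t ∈ T.val, SignType.sign ((p.map φ).eval t.1) = SignType.sign ((p.map χ).eval t.2))
    (hderiv : derivative p ∈ L) : ∃ T', IsSignTable φ χ (insert p L) T' := by
  have hdegφ : 0 < (p.map φ).degree := by
    rwa [← natDegree_pos_iff_degree_pos, natDegree_map_of_leadingCoeff_ne_zero φ hφ]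
  have hdegχ : 0 < (p.map χ).degree := by
    rwa [← natDegree_pos_iff_degree_pos, natDegree_map_of_leadingCoeff_ne_zero χ hχ]
  have hagree : SignAgree T (derivative (p.map φ)) (derivative (p.map χ)) := by
    simpa only [derivative_map] using h.signAgree _ hderiv
  obtain ⟨T', hT'⟩ := exists_isRootExtension hagree hdegφ hdegχ
  refine ⟨T', Finset.forall_mem_insert _ _ _ |>.2 ⟨hT'.signAgree hdegφ hdegχ hT hagree,
    fun q hq => (h.signAgree q hq).mono hT'.le⟩, fun t ht => ?_⟩
  by_cases htT : t ∈ T.val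
  · obtain ⟨q, hq, hroot⟩ := h.exists_root t htT
    exact ⟨q, Finset.mem_insert_of_mem hq, hroot⟩
  · exact ⟨p, Finset.mem_insert_self _ _, hdeg, hφ, hT'.root t ht htT⟩

theorem exists_isSignTable (hL : EliminationClosed L)
    (hlc : ∀ p ∈ L, SignType.sign (φ p.leadingCoeff) = SignType.sign (χ p.leadingCoeff)) :
    ∃ T, IsSignTable φ χ L T := by
  classical
  induction L using Finset.induction_on_max_value (fun p : k[X] => p.natDegree) with
  | empty => exact ⟨default, by simp, fun t ht => absurd ht (Finset.notMem_empty t)⟩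
  | insert p L _ hmax ih =>
    have hp := Finset.mem_insert_self p L
    obtain ⟨hlcp, hlcL⟩ := (Finset.forall_mem_insert _ _ _).1 hlc
    obtain ⟨T, hT⟩ := ih (hL.of_insert hmax) hlcL
    have mem_of_lt {r : k[X]} (hr : r ∈ insert p L) (hlt : r.natDegree < p.natDegree) : r ∈ L :=
      (Finset.mem_insert.1 hr).resolve_left (by rintro rfl; exact hlt.false)
    rcases Nat.eq_zero_or_pos p.natDegree with hconst | hdeg
    · refine ⟨T, hT.insert_of_signAgree fun x y _ => ?_⟩
      obtain ⟨c, rfl⟩ := natDegree_eq_zero.1 hconst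
      simpa using hlcp
    obtain ⟨-, hderiv, herase⟩ := hL p hp p hp hdeg le_rfl
    by_cases hφ : φ p.leadingCoeff = 0
    · have hχ : χ p.leadingCoeff = 0 := by rwa [← sign_eq_zero_iff, ← hlcp, sign_eq_zero_iff]
      refine ⟨T, hT.insert_of_signAgree ?_⟩
      rw [← map_eraseLead_of_map_leadingCoeff_eq_zero hφ,
        ← map_eraseLead_of_map_leadingCoeff_eq_zero hχ]
      exact hT.signAgree _ (mem_of_lt herase (natDegree_eraseLead_lt hdeg))
    · have hχ : χ p.leadingCoeff ≠ 0 := by rwa [← sign_ne_zero, ← hlcp, sign_ne_zero]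
      refine hT.exists_insert hdeg hφ hχ (hT.sign_eval_eq hlcL fun q hq hdegq => ?_)
        (mem_of_lt hderiv (natDegree_derivative_lt hdeg.ne'))
      exact mem_of_lt (hL p hp q (Finset.mem_insert_of_mem hq) hdegq (hmax q hq)).1
        ((natDegree_pseudoRem_lt p hdegq).trans_le (hmax q hq))

end Elimination

section Transfer

open Polynomial

variable {k : Type*} [CommRing k]

theorem eval_map_optionEquivLeft {σ K : Type*} [CommRing K] (φ : k →+* K) (τ : Option σ → K)
    (g : MvPolynomial (Option σ) k) :
    (Polynomial.map (MvPolynomial.eval₂Hom φ (τ ∘ some))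
      (MvPolynomial.optionEquivLeft k σ g)).eval (τ none) = MvPolynomial.eval₂ φ τ g := by
  induction g using MvPolynomial.induction_on with
  | C a => simp
  | add p q hp hq => simp [hp, hq]
  | mul_X p i hp => cases i <;> simp [hp]

variable {K : Type*} [Field K] [LinearOrder K] [IsStrictOrderedRing K] [PolynomialIVP K]
  {R : Type*} [Field R] [LinearOrder R] [IsStrictOrderedRing R] [PolynomialIVP R]
  {φ : k →+* K} {χ : k →+* R}

theorem exists_forall_sign_eval₂_eq {σ : Type*} [Finite σ]
    (hsign : ∀ c, SignType.sign (φ c) = SignType.sign (χ c)) (G : Finset (MvPolynomial σ k))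
    (τ : σ → K) : ∃ x : σ → R, ∀ g ∈ G,
      SignType.sign (MvPolynomial.eval₂ φ τ g) = SignType.sign (MvPolynomial.eval₂ χ x g) := by
  classical
  induction σ using Finite.induction_empty_option with
  | of_equiv e ih =>
    obtain ⟨x, hx⟩ := ih (G.image (MvPolynomial.rename e.symm)) (τ ∘ e)
    refine ⟨x ∘ e.symm, fun g hg => ?_⟩
    simpa [MvPolynomial.eval₂_rename, Function.comp_assoc] using
      hx _ (Finset.mem_image_of_mem _ hg)
  | h_empty =>
    refine ⟨PEmpty.elim, fun g _ => ?_⟩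
    obtain ⟨c, rfl⟩ := MvPolynomial.C_surjective PEmpty g
    simpa only [MvPolynomial.eval₂_C] using hsign c
  | h_option ih =>
    rename_i σ _
    obtain ⟨L, hGL, hL⟩ := exists_eliminationClosed (G.image (MvPolynomial.optionEquivLeft k σ))
    obtain ⟨x, hx⟩ := ih (L.image leadingCoeff) (τ ∘ some)
    obtain ⟨T, hT⟩ := exists_isSignTable (φ := MvPolynomial.eval₂Hom φ (τ ∘ some))
      (χ := MvPolynomial.eval₂Hom χ x) hL fun p hp => hx _ (Finset.mem_image_of_mem _ hp)
    obtain ⟨y, hy⟩ := T.exists_across (τ none)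
    refine ⟨fun i => i.elim y x, fun g hg => ?_⟩
    rw [← eval_map_optionEquivLeft, ← eval_map_optionEquivLeft]
    exact hT.signAgree _ (hGL (Finset.mem_image_of_mem _ hg)) hy

end Transfer

section SquareClosure

/-- The set of sums of elements `m * a ^ 2` with `m ∈ M`: the smallest subsemiring that contains `M`
and all squares. It is the preordering generated by `M`, except that `-1` is not excluded. -/
def squareClosure {A : Type*} [CommRing A] (M : Submonoid A) : Subsemiring A :=
  (M ⊔ Submonoid.square A).subsemiringClosure

variable {A B : Type*} [CommRing A] [CommRing B] {M : Submonoid A} {N : Submonoid B} {x : A}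

theorem mul_sq_mem_squareClosure {m : A} (hm : m ∈ M) (a : A) : m * a ^ 2 ∈ squareClosure M :=
  Submonoid.subsemiringClosure_mem _ |>.2 <| AddSubmonoid.subset_closure <|
    Submonoid.mul_mem_sup hm (IsSquare.sq a)

theorem subset_squareClosure {m : A} (hm : m ∈ M) : m ∈ squareClosure M := by
  simpa using mul_sq_mem_squareClosure hm 1

theorem mem_squareClosure_of_isSquare (hx : IsSquare x) : x ∈ squareClosure M := by
  obtain ⟨a, rfl⟩ := isSquare_iff_exists_sq x |>.1 hx
  simpa using mul_sq_mem_squareClosure M.one_mem a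

theorem squareClosure_induction {P : ∀ x : A, x ∈ squareClosure M → Prop}
    (mul_sq : ∀ m (hm : m ∈ M) a, P (m * a ^ 2) (mul_sq_mem_squareClosure hm a))
    (add : ∀ x y hx hy, P x hx → P y hy → P (x + y) (add_mem hx hy))
    (hx : x ∈ squareClosure M) : P x hx := by
  have hx' := Submonoid.subsemiringClosure_mem _ |>.1 hx
  induction hx' using AddSubmonoid.closure_induction with
  | mem x hx' =>
    obtain ⟨m, hm, y, hy, rfl⟩ := Submonoid.mem_sup.1 hx'
    obtain ⟨a, rfl⟩ := isSquare_iff_exists_sq y |>.1 hy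
    exact mul_sq m hm a
  | zero => simpa using mul_sq 1 M.one_mem 0
  | add x y hx' hy' ihx ihy =>
    exact add x y _ _ (ihx <| Submonoid.subsemiringClosure_mem _ |>.2 hx')
      (ihy <| Submonoid.subsemiringClosure_mem _ |>.2 hy')

theorem map_mem_squareClosure (φ : A →+* B) (hφ : ∀ m ∈ M, φ m ∈ N) (hx : x ∈ squareClosure M) :
    φ x ∈ squareClosure N := by
  induction hx using squareClosure_induction with
  | mul_sq m hm a => simpa using mul_sq_mem_squareClosure (hφ m hm) (φ a)
  | add x y _ _ hx hy => simpa using add_mem hx hy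

theorem exists_mem_squareClosure_of_surjective {φ : A →+* B} (hφ : Function.Surjective φ) {y : B}
    (hy : y ∈ squareClosure (M.map φ)) : ∃ x ∈ squareClosure M, φ x = y := by
  induction hy using squareClosure_induction with
  | mul_sq n hn b =>
    obtain ⟨m, hm, rfl⟩ := hn
    obtain ⟨a, rfl⟩ := hφ b
    exact ⟨m * a ^ 2, mul_sq_mem_squareClosure hm a, by simp⟩
  | add _ _ _ _ hx hy =>
    obtain ⟨x, hx, rfl⟩ := hx
    obtain ⟨y, hy, rfl⟩ := hy
    exact ⟨x + y, add_mem hx hy, map_add φ x y⟩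

end SquareClosure

section AlgebraicallyMaximal

open Polynomial

variable {F : Type*} [Field F]

/-- No proper simple algebraic extension `F[X] ⧸ (p)` of `F` has a preordering that contains `P`:
`-1` is there a sum of squares with coefficients in `P`. -/
def AlgebraicallyMaximal (P : Submonoid F) : Prop :=
  ∀ p : F[X], Irreducible p → p.natDegree ≠ 1 →
    ∃ G ∈ squareClosure (P.map (C : F →+* F[X])), p ∣ 1 + G

theorem exists_dvd_sub_of_mem_squareClosure {P : RingPreordering F} {G : F[X]} (d : F)
    (hG : G ∈ squareClosure (P.toSubmonoid.map (C : F →+* F[X]))) :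
    ∃ s ∈ P, ∃ t ∈ P, ∃ u, X ^ 2 - C d ∣ G - (C (s + d * t) + C u * X) := by
  have hmonic : (X ^ 2 - C d).Monic := monic_X_pow_sub_C d two_ne_zero
  induction hG using squareClosure_induction with
  | mul_sq m hm g =>
    obtain ⟨c, hc, rfl⟩ := hm
    have hdeg : (g %ₘ (X ^ 2 - C d)).natDegree < 2 := by
      simpa using natDegree_modByMonic_lt g hmonic fun h => by simpa using congrArg natDegree h
    obtain ⟨v, u, hvu⟩ := exists_eq_X_add_C_of_natDegree_le_one (Nat.le_of_lt_succ hdeg)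
    refine ⟨c * u ^ 2, mul_mem hc (P.pow_two_mem u), c * v ^ 2, mul_mem hc (P.pow_two_mem v),
      2 * c * u * v, C c * ((g /ₘ (X ^ 2 - C d)) * (g + C v * X + C u) + C v ^ 2), ?_⟩
    have hg := modByMonic_add_div g (X ^ 2 - C d)
    rw [hvu] at hg
    simp only [map_add, map_mul, map_pow, map_ofNat]
    linear_combination -(C c * (g + C v * X + C u)) * hg
  | add G H _ _ hG hH =>
    obtain ⟨s, hs, t, ht, u, hG⟩ := hG
    obtain ⟨s', hs', t', ht', u', hH⟩ := hH
    refine ⟨s + s', add_mem hs hs', t + t', add_mem ht ht', u + u', ?_⟩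
    convert dvd_add hG hH using 1
    simp only [map_add, map_mul]
    ring

theorem AlgebraicallyMaximal.mem_or_neg_mem {P : RingPreordering F}
    (h : AlgebraicallyMaximal P.toSubmonoid) (d : F) : d ∈ P ∨ -d ∈ P := by
  by_cases hd : ∃ b, b ^ 2 = d
  · obtain ⟨b, rfl⟩ := hd
    exact Or.inl (P.pow_two_mem b)
  right
  have hirr : Irreducible (X ^ 2 - C d) :=
    X_pow_sub_C_irreducible_of_prime Nat.prime_two fun b hb => hd ⟨b, hb⟩
  obtain ⟨G, hG, hdvd⟩ := h _ hirr (by simp)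
  obtain ⟨s, hs, t, ht, u, hGdvd⟩ := exists_dvd_sub_of_mem_squareClosure d hG
  have hzero : C (1 + s + d * t) + C u * X = 0 := by
    refine eq_zero_of_dvd_of_natDegree_lt (p := X ^ 2 - C d) ?_ ?_
    · convert dvd_sub hdvd hGdvd using 1
      simp only [map_add, map_mul, map_one]
      ring
    · rw [natDegree_X_pow_sub_C, add_comm]
      exact Nat.lt_succ_of_le natDegree_linear_le
  have hone : 1 + s + d * t = 0 := by simpa using congrArg (fun p => p.coeff 0) hzero
  have ht0 : t ≠ 0 := by
    rintro rfl
    refine P.neg_one_notMem ?_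
    rwa [← eq_neg_of_add_eq_zero_right (a := 1) (by simpa using hone)]
  have hneg : -d = (1 + s) * t⁻¹ := by
    field_simp
    linear_combination -hone
  rw [hneg]
  exact mul_mem (add_mem (one_mem P) hs) (RingPreordering.inv_mem ht)

end AlgebraicallyMaximal

section OfPreordering

variable {F : Type*} [Field F]

theorem exists_linearOrder_of_ringPreordering (P : RingPreordering F)
    (htotal : ∀ x, x ∈ P ∨ -x ∈ P) :
    ∃ (_ : LinearOrder F) (_ : IsStrictOrderedRing F), ∀ x : F, 0 ≤ x ↔ x ∈ P := by
  classical
  let cone : RingCone F :=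
    { P.toSubsemiring with eq_zero_of_mem_of_neg_mem' := P.eq_zero_of_mem_of_neg_mem }
  have : HasMemOrNegMem cone := ⟨htotal⟩
  let order : LinearOrder F := .mkOfAddGroupCone cone
  have : IsOrderedRing F := .mkOfCone cone
  exact ⟨order, IsOrderedRing.toIsStrictOrderedRing F, fun x => by
    change x - 0 ∈ P ↔ x ∈ P
    rw [sub_zero]⟩

end OfPreordering

section Ordered

open Polynomial Set

variable {F : Type*} [Field F] [LinearOrder F] [IsStrictOrderedRing F] {p : F[X]} {a b : F}

theorem eval_nonneg_of_mem_squareClosure {G : F[X]}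
    (hG : G ∈ squareClosure ((Subsemiring.nonneg F).toSubmonoid.map (C : F →+* F[X]))) (x : F) :
    0 ≤ G.eval x := by
  induction hG using squareClosure_induction with
  | mul_sq m hm g =>
    obtain ⟨c, hc, rfl⟩ := hm
    simpa using mul_nonneg (Subsemiring.mem_nonneg.1 hc) (sq_nonneg (g.eval x))
  | add G H _ _ hG hH => simpa using add_nonneg hG hH

theorem natDegree_pos_of_eval_mul_eval_neg (h : p.eval a * p.eval b < 0) : 0 < p.natDegree := by
  by_contra! hdeg
  obtain ⟨c, rfl⟩ := natDegree_eq_zero.1 (Nat.le_zero.1 hdeg)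
  simp only [eval_C] at h
  exact h.not_ge (mul_self_nonneg c)

theorem exists_mem_squareClosure_dvd_sub {F : Type*} [Field F] {P : Submonoid F} {p G : F[X]}
    (hp : 0 < p.natDegree) (hG : G ∈ squareClosure (P.map (C : F →+* F[X]))) :
    ∃ G' ∈ squareClosure (P.map (C : F →+* F[X])), p ∣ G - G' ∧ G'.natDegree < 2 * p.natDegree := by
  induction hG using squareClosure_induction with
  | mul_sq m hm g =>
    obtain ⟨c, hc, rfl⟩ := hm
    refine ⟨C c * (g % p) ^ 2, mul_sq_mem_squareClosure (Submonoid.mem_map_of_mem _ hc) _, ?_, ?_⟩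
    · rw [← mul_sub, sq_sub_sq]
      have hdvd : p ∣ g - g % p := ⟨g / p, sub_eq_of_eq_add' (EuclideanDomain.mod_add_div g p).symm⟩
      exact (hdvd.mul_left _).mul_left _
    · have hmod := natDegree_mod_lt g hp.ne'
      have hle := (natDegree_C_mul_le c ((g % p) ^ 2)).trans natDegree_pow_le
      lia
  | add G H _ _ hG hH =>
    obtain ⟨G', hG', hdvdG, hdegG⟩ := hG
    obtain ⟨H', hH', hdvdH, hdegH⟩ := hH
    exact ⟨G' + H', add_mem hG' hH', add_sub_add_comm G H G' H' ▸ dvd_add hdvdG hdvdH,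
      (natDegree_add_le G' H').trans_lt (max_lt hdegG hdegH)⟩

-- If `p * q = 1 + G` then `q` changes sign together with `p`, and reducing `G` modulo `p` makes the
-- degree of `q` smaller than that of `p`.
theorem not_dvd_one_add_of_eval_mul_eval_neg {G : F[X]} (h : p.eval a * p.eval b < 0)
    (hG : G ∈ squareClosure ((Subsemiring.nonneg F).toSubmonoid.map (C : F →+* F[X]))) :
    ¬p ∣ 1 + G := by
  induction hn : p.natDegree using Nat.strong_induction_on generalizing p G with
  | _ n ih =>
    intro hdvd
    obtain ⟨G', hG', hdvd', hdeg⟩ :=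
      exists_mem_squareClosure_dvd_sub (natDegree_pos_of_eval_mul_eval_neg h) hG
    obtain ⟨q, hq⟩ : p ∣ 1 + G' := by
      simpa [add_sub_assoc] using dvd_sub hdvd hdvd'
    have hpos (x : F) : 0 < p.eval x * q.eval x := by
      rw [← eval_mul, ← hq, eval_add, eval_one]
      exact add_pos_of_pos_of_nonneg one_pos (eval_nonneg_of_mem_squareClosure hG' x)
    have hqneg : q.eval a * q.eval b < 0 := by
      have hprod : 0 < p.eval a * p.eval b * (q.eval a * q.eval b) := by
        rw [mul_mul_mul_comm]
        exact mul_pos (hpos a) (hpos b)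
      exact neg_of_mul_pos_right hprod h.le
    have hdegq : q.natDegree < n := by
      have hmul : (1 + G').natDegree = p.natDegree + q.natDegree := by
        rw [hq, natDegree_mul (ne_zero_of_natDegree_gt (natDegree_pos_of_eval_mul_eval_neg h))
          (ne_zero_of_natDegree_gt (natDegree_pos_of_eval_mul_eval_neg hqneg))]
      have hadd : (1 + G').natDegree ≤ G'.natDegree := by simpa using natDegree_add_le 1 G'
      lia
    exact ih _ hdegq hqneg hG' rfl ⟨p, hq.trans (mul_comm p q)⟩

theorem exists_irreducible_dvd_eval_mul_eval_neg (h : p.eval a * p.eval b < 0) :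
    ∃ q, Irreducible q ∧ q ∣ p ∧ q.eval a * q.eval b < 0 := by
  induction p using WfDvdMonoid.induction_on_irreducible with
  | zero => simp at h
  | unit p hp =>
    exact absurd (natDegree_eq_zero_of_isUnit hp) (natDegree_pos_of_eval_mul_eval_neg h).ne'
  | mul p q _ hq ih =>
    rw [eval_mul, eval_mul, mul_mul_mul_comm] at h
    rcases mul_neg_iff.1 h with ⟨-, hp⟩ | ⟨hneg, -⟩
    · obtain ⟨r, hr, hdvd, hr'⟩ := ih hp
      exact ⟨r, hr, hdvd.mul_left q, hr'⟩
    · exact ⟨q, hq, dvd_mul_right q p, hneg⟩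

theorem exists_mem_Ioo_eval_eq_zero_of_natDegree_eq_one (hdeg : p.natDegree = 1) (hab : a < b)
    (h : p.eval a * p.eval b < 0) : ∃ c ∈ Ioo a b, p.eval c = 0 := by
  obtain ⟨u, hu, v, rfl⟩ := natDegree_eq_one.1 hdeg
  have heval (x : F) : (C u * X + C v).eval x = u * (x - -v / u) := by
    simp only [eval_add, eval_mul, eval_C, eval_X]
    field_simp
    ring
  refine ⟨-v / u, ?_, by rw [heval, sub_self, mul_zero]⟩
  rw [heval, heval, mul_mul_mul_comm] at h
  have hneg : (a - -v / u) * (b - -v / u) < 0 := (pos_iff_neg_of_mul_neg h).1 (mul_self_pos.2 hu)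
  rcases mul_neg_iff.1 hneg with ⟨ha, hb⟩ | ⟨ha, hb⟩
  · exact absurd ((sub_neg.1 hb).trans (sub_pos.1 ha)) hab.not_gt
  · exact ⟨sub_neg.1 ha, sub_pos.1 hb⟩

theorem AlgebraicallyMaximal.polynomialIVP
    (hmax : AlgebraicallyMaximal (Subsemiring.nonneg F).toSubmonoid) : PolynomialIVP F where
  exists_eval_eq_zero {p a b} hab h := by
    obtain ⟨q, hq, hdvd, hneg⟩ := exists_irreducible_dvd_eval_mul_eval_neg h
    have hdeg : q.natDegree = 1 := by
      by_contra hdeg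
      obtain ⟨G, hG, hdvdG⟩ := hmax q hq hdeg
      exact not_dvd_one_add_of_eval_mul_eval_neg hneg hG hdvdG
    obtain ⟨c, hc, hroot⟩ := exists_mem_Ioo_eval_eq_zero_of_natDegree_eq_one hdeg hab hneg
    exact ⟨c, hc, eval_eq_zero_of_dvd_of_eval_eq_zero hdvd hroot⟩

end Ordered

section RealClosedPoint

open Polynomial IntermediateField

universe u

theorem exists_mul_map_eq_of_mem_squareClosure_map {A B : Type*} [CommRing A] [CommRing B]
    {M S : Submonoid A} {ψ : A →+* B} (hψ : ∀ y, ∃ a, ∃ s ∈ S, y * ψ s = ψ a)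
    (hS : ∀ s ∈ S, s ∈ squareClosure M) {x : B} (hx : x ∈ squareClosure (M.map ψ)) :
    ∃ s ∈ S, ∃ t ∈ squareClosure M, x * ψ s = ψ t := by
  induction hx using squareClosure_induction with
  | mul_sq c hc y =>
    obtain ⟨c, hc, rfl⟩ := hc
    obtain ⟨a, s, hs, hy⟩ := hψ y
    refine ⟨s ^ 2, pow_mem hs 2, c * a ^ 2, mul_sq_mem_squareClosure hc a, ?_⟩
    rw [map_mul, map_pow, map_pow, ← hy]
    ring
  | add x y _ _ hx hy =>
    obtain ⟨s, hs, t, ht, hx⟩ := hx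
    obtain ⟨s', hs', t', ht', hy⟩ := hy
    refine ⟨s * s', mul_mem hs hs', t * s' + t' * s,
      add_mem (mul_mem ht (hS s' hs')) (mul_mem ht' (hS s hs)), ?_⟩
    simp only [map_add, map_mul, ← hx, ← hy]
    ring

theorem exists_field_neg_one_notMem_squareClosure {A : Type u} [CommRing A] {M : Submonoid A}
    (h : -1 ∉ squareClosure M) :
    ∃ (F : Type u) (_ : Field F) (ψ : A →+* F), -1 ∉ squareClosure (M.map ψ) := by
  let S : Submonoid A :=
    { carrier := {x | x ∈ squareClosure M ∧ x - 1 ∈ squareClosure M}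
      one_mem' := ⟨one_mem _, by simp⟩
      mul_mem' := fun {x y} hx hy => ⟨mul_mem hx.1 hy.1, by
        convert add_mem (mul_mem hx.2 hy.1) hy.2 using 1
        ring⟩ }
  have : Nontrivial (Localization S) := by
    rw [← not_subsingleton_iff_nontrivial, IsLocalization.subsingleton_iff (M := S)]
    exact fun h0 => h (by simpa using h0.2)
  obtain ⟨m, hm⟩ := Ideal.exists_maximal (Localization S)
  let : Field (Localization S ⧸ m) := Ideal.Quotient.field m
  let ψ : A →+* Localization S ⧸ m := (Ideal.Quotient.mk m).comp (algebraMap A (Localization S))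
  have hψ (s : S) : ψ s ≠ 0 :=
    ((IsLocalization.map_units (Localization S) s).map (Ideal.Quotient.mk m)).ne_zero
  have hfrac (y : Localization S ⧸ m) : ∃ a, ∃ s ∈ S, y * ψ s = ψ a := by
    obtain ⟨y, rfl⟩ := Ideal.Quotient.mk_surjective y
    obtain ⟨⟨a, s⟩, hy⟩ := IsLocalization.surj S y
    exact ⟨a, s, s.2, by simpa [ψ] using congrArg (Ideal.Quotient.mk m) hy⟩
  refine ⟨Localization S ⧸ m, inferInstance, ψ, fun hneg => ?_⟩
  obtain ⟨s, hs, t, ht, hst⟩ :=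
    exists_mul_map_eq_of_mem_squareClosure_map hfrac (fun _ hs => hs.1) hneg
  refine hψ ⟨s + t, add_mem hs.1 ht, ?_⟩ ?_
  · rw [add_sub_right_comm]
    exact add_mem hs.2 ht
  · rw [map_add, ← hst]
    ring

section Extension

variable {F Ω : Type*} [Field F] [Field Ω] [Algebra F Ω] {M : Submonoid F}

theorem map_inclusion_mem_squareClosure {E E' : IntermediateField F Ω} (hle : E ≤ E') {x : E}
    (hx : x ∈ squareClosure (M.map (algebraMap F E))) :
    inclusion hle x ∈ squareClosure (M.map (algebraMap F E')) := by
  refine map_mem_squareClosure (inclusion hle : E →+* E') ?_ hx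
  rintro _ ⟨m, hm, rfl⟩
  exact ⟨m, hm, ((inclusion hle).commutes m).symm⟩

theorem exists_mem_squareClosure_of_directedOn {c : Set (IntermediateField F Ω)}
    (hne : c.Nonempty) (hc : DirectedOn (· ≤ ·) c) {x : ↥(sSup c)}
    (hx : x ∈ squareClosure (M.map (algebraMap F ↥(sSup c)))) :
    ∃ E ∈ c, ∃ y ∈ squareClosure (M.map (algebraMap F E)), (y : Ω) = x := by
  induction hx using squareClosure_induction with
  | mul_sq m hm a =>
    obtain ⟨m, hm, rfl⟩ := hm
    obtain ⟨E, hE, ha⟩ : ∃ E ∈ c, (a : Ω) ∈ E := by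
      simpa using CompleteLattice.isCompactElement_iff_le_of_directed_sSup_le _ _ |>.1
        (adjoin_simple_isCompactElement (F := F) (a : Ω)) c hne hc (by simp)
    exact ⟨E, hE, algebraMap F E m * ⟨a, ha⟩ ^ 2,
      mul_sq_mem_squareClosure (Submonoid.mem_map_of_mem _ hm) _, rfl⟩
  | add x y _ _ hx hy =>
    obtain ⟨E, hE, x', hx', hx⟩ := hx
    obtain ⟨E', hE', y', hy', hy⟩ := hy
    obtain ⟨E'', hE'', hle, hle'⟩ := hc E hE E' hE'
    refine ⟨E'', hE'', _, add_mem (map_inclusion_mem_squareClosure hle hx')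
      (map_inclusion_mem_squareClosure hle' hy'), ?_⟩
    simp [hx, hy]

theorem exists_maximal_neg_one_notMem_squareClosure (h : -1 ∉ squareClosure M) :
    ∃ K : IntermediateField F Ω, Maximal
      (fun E : IntermediateField F Ω => -1 ∉ squareClosure (M.map (algebraMap F E))) K := by
  have hbot : -1 ∉ squareClosure (M.map (algebraMap F (⊥ : IntermediateField F Ω))) := by
    intro hmem
    apply h
    have hbotM : ∀ m ∈ M.map (algebraMap F (⊥ : IntermediateField F Ω)), botEquiv F Ω m ∈ M := by
      rintro _ ⟨m, hm, rfl⟩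
      simpa using hm
    simpa using map_mem_squareClosure (botEquiv F Ω : (⊥ : IntermediateField F Ω) →+* F) hbotM hmem
  suffices ∀ c ⊆ {E : IntermediateField F Ω | -1 ∉ squareClosure (M.map (algebraMap F E))},
      IsChain (· ≤ ·) c → c.Nonempty → -1 ∉ squareClosure (M.map (algebraMap F ↥(sSup c))) by
    obtain ⟨K, -, hK⟩ := zorn_le_nonempty₀ _
      (fun c hc hchain E hE => ⟨sSup c, this c hc hchain ⟨E, hE⟩, fun _ => le_sSup⟩) ⊥ hbot
    exact ⟨K, hK⟩
  intro c hc hchain hne hmem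
  obtain ⟨E, hE, y, hy, hyx⟩ := exists_mem_squareClosure_of_directedOn hne hchain.directedOn hmem
  obtain rfl : y = -1 := Subtype.ext (by simpa using hyx)
  exact hc hE hy

theorem exists_minpoly_dvd_one_add {α : Ω} (hα : IsIntegral F α)
    (h : -1 ∈ squareClosure (M.map (algebraMap F F⟮α⟯))) :
    ∃ G ∈ squareClosure (M.map (C : F →+* F[X])), minpoly F α ∣ 1 + G := by
  let π : F[X] →+* F⟮α⟯ := (aeval (R := F) (AdjoinSimple.gen F α) : F[X] →ₐ[F] F⟮α⟯)
  have hπ : Function.Surjective π := fun y =>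
    (adjoin.powerBasis hα).exists_eq_aeval' y |>.imp fun _ => Eq.symm
  have hmap : M.map (algebraMap F F⟮α⟯) = (M.map (C : F →+* F[X])).map π := by
    ext x
    simp [π]
  rw [hmap] at h
  obtain ⟨G, hG, hGπ⟩ := exists_mem_squareClosure_of_surjective hπ h
  refine ⟨G, hG, ?_⟩
  rw [← minpoly_gen F α]
  refine minpoly.dvd F _ ?_
  rw [map_add, map_one, add_comm]
  exact eq_neg_iff_add_eq_zero.1 hGπ

theorem algebraicallyMaximal_of_maximal [IsAlgClosed Ω] {K : IntermediateField F Ω}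
    (hK : Maximal
      (fun E : IntermediateField F Ω => -1 ∉ squareClosure (M.map (algebraMap F E))) K) :
    AlgebraicallyMaximal (squareClosure (M.map (algebraMap F K))).toSubmonoid := by
  intro p hp hdeg
  obtain ⟨α, hα⟩ := IsAlgClosed.exists_aeval_eq_zero Ω p (degree_pos_of_irreducible hp).ne'
  have hint : IsIntegral K α := IsAlgebraic.isIntegral ⟨p, hp.ne_zero, hα⟩
  have hpα : p * C p.leadingCoeff⁻¹ = minpoly K α := minpoly.eq_of_irreducible hp hα
  have hαK : α ∉ K := by
    intro hmem
    apply hdeg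
    rw [← natDegree_mul_C (inv_ne_zero (leadingCoeff_ne_zero.2 hp.ne_zero)), hpα,
      minpoly.natDegree_eq_one_iff]
    exact ⟨⟨α, hmem⟩, rfl⟩
  have hlt : ¬K⟮α⟯.restrictScalars F ≤ K := fun hle => hαK (hle (mem_adjoin_simple_self K α))
  have hle : K ≤ K⟮α⟯.restrictScalars F := fun x hx => K⟮α⟯.algebraMap_mem ⟨x, hx⟩
  have hneg : -1 ∈ squareClosure (M.map (algebraMap F (K⟮α⟯.restrictScalars F))) :=
    of_not_not fun h => hlt (hK.le_of_ge h hle)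
  obtain ⟨G, hG, hdvd⟩ := exists_minpoly_dvd_one_add
    (M := (squareClosure (M.map (algebraMap F K))).toSubmonoid) hint (by
      convert map_mem_squareClosure (RingHom.id K⟮α⟯) ?_ hneg
      · exact rfl
      rintro _ ⟨m, hm, rfl⟩
      exact ⟨algebraMap F K m, subset_squareClosure ⟨m, hm, rfl⟩, rfl⟩)
  exact ⟨G, hG, (Dvd.intro _ hpα).trans hdvd⟩

end Extension

theorem exists_polynomialIVP_nonneg_of_neg_one_notMem {A : Type u} [CommRing A] {M : Submonoid A}
    (h : -1 ∉ squareClosure M) :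
    ∃ (K : Type u) (_ : Field K) (_ : LinearOrder K) (_ : IsStrictOrderedRing K)
      (_ : PolynomialIVP K) (θ : A →+* K), ∀ m ∈ M, 0 ≤ θ m := by
  obtain ⟨F, _, ψ, hψ⟩ := exists_field_neg_one_notMem_squareClosure h
  obtain ⟨K, hK⟩ := exists_maximal_neg_one_notMem_squareClosure (Ω := AlgebraicClosure F) hψ
  let P : RingPreordering K :=
    { squareClosure ((M.map ψ).map (algebraMap F K)) with
      mem_of_isSquare' := mem_squareClosure_of_isSquare
      neg_one_notMem' := hK.prop }
  have hmax : AlgebraicallyMaximal P.toSubmonoid := algebraicallyMaximal_of_maximal hK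
  obtain ⟨_, _, hP⟩ := exists_linearOrder_of_ringPreordering P hmax.mem_or_neg_mem
  have hPeq : P.toSubmonoid = (Subsemiring.nonneg K).toSubmonoid :=
    SetLike.ext fun x => (hP x).symm
  refine ⟨K, inferInstance, _, ‹_›, (hPeq ▸ hmax).polynomialIVP, (algebraMap F K).comp ψ,
    fun m hm => (hP _).2 ?_⟩
  exact subset_squareClosure ⟨ψ m, ⟨m, hm, rfl⟩, rfl⟩

end RealClosedPoint

section Certificate

variable {A ι : Type*} [CommRing A] {f : ι → A} {x : A}

theorem exists_eq_prod_mul_sq_of_mem_closure_range [Finite ι]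
    (hx : x ∈ Submonoid.closure (Set.range f)) :
    ∃ (B : Finset ι) (g : A), x = (∏ i ∈ B, f i) * g ^ 2 := by
  have := Fintype.ofFinite ι
  obtain ⟨e, rfl⟩ := Submonoid.exists_of_mem_closure_range f x hx
  refine ⟨Finset.univ.filter fun i => e i % 2 = 1, ∏ i, f i ^ (e i / 2), ?_⟩
  rw [Finset.prod_filter, ← Finset.prod_pow, ← Finset.prod_mul_distrib]
  refine Finset.prod_congr rfl fun i _ => ?_
  rw [← pow_mul, mul_comm]
  conv_lhs => rw [← Nat.div_add_mod (e i) 2, pow_add, mul_comm 2]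
  rcases Nat.mod_two_eq_zero_or_one (e i) with h | h <;> simp [h]

theorem exists_eq_sum_isSumSq_mul_prod [Fintype ι]
    (hx : x ∈ squareClosure (Submonoid.closure (Set.range f))) :
    ∃ s : Finset ι → A, (∀ B, IsSumSq (s B)) ∧ x = ∑ B, s B * ∏ i ∈ B, f i := by
  classical
  induction hx using squareClosure_induction with
  | mul_sq m hm a =>
    obtain ⟨B, g, rfl⟩ := exists_eq_prod_mul_sq_of_mem_closure_range hm
    refine ⟨Pi.single B ((g * a) ^ 2), fun D => ?_, ?_⟩
    · rcases eq_or_ne D B with rfl | h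
      · simpa only [Pi.single_eq_same] using (IsSquare.sq (g * a)).isSumSq
      · simp [h]
    · simp only [Pi.single_apply, ite_mul, zero_mul, Finset.sum_ite_eq', Finset.mem_univ, if_true]
      ring
  | add x y _ _ hx hy =>
    obtain ⟨s, hs, rfl⟩ := hx
    obtain ⟨s', hs', rfl⟩ := hy
    exact ⟨s + s', fun B => (hs B).add (hs' B), by
      simp only [Pi.add_apply, add_mul, Finset.sum_add_distrib]⟩

theorem exists_certificate_of_neg_one_mem {κ : Type*} [Fintype ι] [Fintype κ] {h : κ → A}
    (hneg : -1 ∈ squareClosure ((Submonoid.closure (Set.range f)).map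
      (Ideal.Quotient.mk (Ideal.span (Set.range h))))) :
    ∃ (t : κ → A) (s : Finset ι → A), (∀ B, IsSumSq (s B)) ∧
      -1 = ∑ j, t j * h j + ∑ B, s B * ∏ i ∈ B, f i := by
  obtain ⟨x, hx, hx1⟩ :=
    exists_mem_squareClosure_of_surjective Ideal.Quotient.mk_surjective hneg
  obtain ⟨s, hs, rfl⟩ := exists_eq_sum_isSumSq_mul_prod hx
  have hmem : -1 - ∑ B, s B * ∏ i ∈ B, f i ∈ Ideal.span (Set.range h) := by
    rw [← Ideal.Quotient.mk_eq_mk_iff_sub_mem, hx1, map_neg, map_one]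
  obtain ⟨t, ht⟩ := Ideal.mem_span_range_iff_exists_fun.1 hmem
  exact ⟨t, s, hs, by rw [ht, sub_add_cancel]⟩

end Certificate

section Positivstellensatz

open MvPolynomial

theorem eval_nonneg_of_isSumSq {σ R : Type*} [CommRing R] [LinearOrder R] [IsOrderedRing R]
    {s : MvPolynomial σ R} (hs : IsSumSq s) (x : σ → R) : 0 ≤ eval x s := by
  induction hs with
  | zero => simp
  | sq_add a _ ih => simpa using add_nonneg (mul_self_nonneg (eval x a)) ih

variable {σ R : Type*} [Field R] [LinearOrder R] [IsStrictOrderedRing R] [PolynomialIVP R]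

theorem exists_forall_sign_eval_eq_sign_map [Finite σ] {K : Type*} [Field K] [LinearOrder K]
    [IsStrictOrderedRing K] [PolynomialIVP K] (θ : MvPolynomial σ R →+* K)
    (G : Finset (MvPolynomial σ R)) :
    ∃ x : σ → R, ∀ g ∈ G, SignType.sign (eval x g) = SignType.sign (θ g) := by
  obtain ⟨x, hx⟩ := exists_forall_sign_eval₂_eq (φ := θ.comp C) (χ := RingHom.id R)
    (sign_map_of_polynomialIVP _) G (fun i => θ (X i))
  have hθ : eval₂Hom (θ.comp C) (fun i => θ (X i)) = θ := by ext <;> simp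
  refine ⟨x, fun g hg => ?_⟩
  rw [← congrArg (· g) hθ]
  exact (hx g hg).symm

variable {ι κ : Type*} {f : ι → MvPolynomial σ R} {h : κ → MvPolynomial σ R}

theorem exists_eval_nonneg_and_eval_eq_zero [Finite σ] [Finite ι] [Finite κ]
    (hneg : -1 ∉ squareClosure ((Submonoid.closure (Set.range f)).map
      (Ideal.Quotient.mk (Ideal.span (Set.range h))))) :
    ∃ x : σ → R, (∀ i, 0 ≤ eval x (f i)) ∧ ∀ j, eval x (h j) = 0 := by
  classical
  obtain ⟨K, _, _, _, _, θ, hθ⟩ := exists_polynomialIVP_nonneg_of_neg_one_notMem hneg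
  have hf (i : ι) : 0 ≤ θ (Ideal.Quotient.mk _ (f i)) :=
    hθ _ <| Submonoid.mem_map_of_mem _ <| Submonoid.subset_closure ⟨i, rfl⟩
  have hh (j : κ) : θ (Ideal.Quotient.mk (Ideal.span (Set.range h)) (h j)) = 0 := by
    rw [Ideal.Quotient.eq_zero_iff_mem.2 (Ideal.subset_span (Set.mem_range_self j)), map_zero]
  obtain ⟨x, hx⟩ := exists_forall_sign_eval_eq_sign_map (θ.comp (Ideal.Quotient.mk _))
    ((Set.finite_range f).union (Set.finite_range h)).toFinset
  refine ⟨x, fun i => ?_, fun j => ?_⟩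
  · rw [← sign_nonneg_iff, hx (f i) (by simp), sign_nonneg_iff]
    exact hf i
  · rw [← sign_eq_zero_iff, hx (h j) (by simp), sign_eq_zero_iff]
    exact hh j

theorem stmt13_general [Finite σ] [Fintype ι] [Fintype κ] (f : ι → MvPolynomial σ R)
    (h : κ → MvPolynomial σ R) :
    {x : σ → R | (∀ i, 0 ≤ eval x (f i)) ∧ ∀ j, eval x (h j) = 0} = ∅ ↔
      ∃ (t : κ → MvPolynomial σ R) (s : Finset ι → MvPolynomial σ R),
        (∀ B, IsSumSq (s B)) ∧ -1 = ∑ j, t j * h j + ∑ B, s B * ∏ i ∈ B, f i := by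
  constructor
  · intro hempty
    refine exists_certificate_of_neg_one_mem <| of_not_not fun hneg => ?_
    obtain ⟨x, hx⟩ := exists_eval_nonneg_and_eval_eq_zero hneg
    exact Set.eq_empty_iff_forall_notMem.1 hempty x hx
  · rintro ⟨t, s, hs, hcert⟩
    refine Set.eq_empty_of_forall_notMem fun x hx => ?_
    have hnonneg : 0 ≤ eval x (∑ B, s B * ∏ i ∈ B, f i) := by
      simp only [map_sum, map_mul, map_prod]
      exact Finset.sum_nonneg fun B _ =>
        mul_nonneg (eval_nonneg_of_isSumSq (hs B) x) (Finset.prod_nonneg fun i _ => hx.1 i)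
    have hzero : eval x (∑ j, t j * h j) = 0 := by simp [hx.2]
    have heval := congrArg (eval x) hcert
    rw [map_add, hzero, zero_add, map_neg, map_one] at heval
    exact (neg_one_lt_zero.trans_le hnonneg).ne heval

theorem isSOS_iff_isSumSq {n : ℕ} {p : MvPolynomial (Fin n) ℝ} : IsSOS p ↔ IsSumSq p := by
  constructor
  · rintro ⟨k, g, rfl⟩
    exact IsSumSq.sum_sq _ g
  · intro hp
    induction hp with
    | zero => exact ⟨0, Fin.elim0, by simp⟩
    | sq_add a _ ih =>
      obtain ⟨k, g, rfl⟩ := ih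
      exact ⟨k + 1, Fin.cons a g, by simp [Fin.sum_univ_succ, sq]⟩

end Positivstellensatz

/-- Stengle's Positivstellensatz: the basic closed semialgebraic
set `{x : fᵢ(x) ≥ 0 ∀i, hⱼ(x) = 0 ∀j}` is empty iff
`-1 = Σⱼ tⱼhⱼ + Σ_{A ⊆ {1,…,m}} s_A ∏_{i ∈ A} fᵢ` for some polynomials `tⱼ` and
sums of squares `s_A` (the `A = ∅` term being the plain SOS `s₀`). -/
theorem stmt13 {n m p : ℕ}
    (f : Fin m → MvPolynomial (Fin n) ℝ) (h : Fin p → MvPolynomial (Fin n) ℝ) :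
    {x : Fin n → ℝ |
        (∀ i, 0 ≤ MvPolynomial.eval x (f i)) ∧ (∀ j, MvPolynomial.eval x (h j) = 0)} = ∅ ↔
    ∃ (t : Fin p → MvPolynomial (Fin n) ℝ)
      (s : Finset (Fin m) → MvPolynomial (Fin n) ℝ),
      (∀ A : Finset (Fin m), IsSOS (s A)) ∧
      (-1 : MvPolynomial (Fin n) ℝ)
        = (∑ j, t j * h j) + ∑ A : Finset (Fin m), s A * ∏ i ∈ A, f i := by
  simpa only [isSOS_iff_isSumSq] using stmt13_general f h
end
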